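/- Near-optimal posterior convergence for the empirical Bayes spike and slab LASSO with Cauchy slab: there exist constants C > 0, N_0 > 0 and c_0, c_1 > 0 such that, for any n ≥ N_0 and any s_n satisfying c_1·log²n ≤ s_n ≤ c_0·n, sup_{θ_0 ∈ ℓ0[s_n]} E_{θ_0} ∫ ‖θ − θ_0‖² dΠ_{ĥα}(θ | X) ≤ C·s_n·log n. Moreover, if one only assumes s_n ≤ c_0·n, the same statement holds with the bound replaced by C·(s_n·log n + log³n). -/

import Mathlib

/-!
Statement 3: near-optimal posterior convergence for the empirical Bayes
spike and slab LASSO prior with Cauchy slab.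
-/

open MeasureTheory Real Set

noncomputable section

/-- Standard normal density. -/
def phi (x : ℝ) : ℝ := Real.exp (-x ^ 2 / 2) / Real.sqrt (2 * Real.pi)

/-- Spike inverse-scale `λ₀ = 5√(2π) n`. -/
def lam0 (n : ℕ) : ℝ := 5 * Real.sqrt (2 * Real.pi) * n

/-- Slab scale parameter `λ₁ = 0.05`. -/
def lam1 : ℝ := 0.05

/-- Spike density: Laplace with parameter `λ₀`. -/
def gamma0 (n : ℕ) (x : ℝ) : ℝ := lam0 n / 2 * Real.exp (-(lam0 n) * |x|)

/-- Slab density: Cauchy with scale `1/λ₁`. -/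
def gamma1 (x : ℝ) : ℝ := lam1 / Real.pi * (1 + lam1 ^ 2 * x ^ 2)⁻¹

/-- `g₀ = φ * γ₀`. -/
def g0 (n : ℕ) (x : ℝ) : ℝ := ∫ u, phi (x - u) * gamma0 n u

/-- `g₁ = φ * γ₁`. -/
def g1 (x : ℝ) : ℝ := ∫ u, phi (x - u) * gamma1 u

/-- Posterior weight `a(x) = α g₁(x) / ((1-α) g₀(x) + α g₁(x))`. -/
def aSSL (n : ℕ) (α x : ℝ) : ℝ := α * g1 x / ((1 - α) * g0 n x + α * g1 x)

/-- Single-coordinate SSL posterior `(1-a(x)) G_{0,x} + a(x) G_{1,x}`. -/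
def coordPostSSL (n : ℕ) (α x : ℝ) : Measure ℝ :=
  volume.withDensity fun u => ENNReal.ofReal
    ((1 - aSSL n α x) * (phi (x - u) * gamma0 n u / g0 n x)
      + aSSL n α x * (phi (x - u) * gamma1 u / g1 x))

/-- SSL posterior `Π_α[· | X]` on `ℝⁿ` for fixed `α`. -/
def postSSL (n : ℕ) (α : ℝ) (X : Fin n → ℝ) : Measure (Fin n → ℝ) :=
  Measure.pi fun i => coordPostSSL n α (X i)

/-- Law `P_θ` of the data. -/
def Pdata (n : ℕ) (θ : Fin n → ℝ) : Measure (Fin n → ℝ) :=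
  Measure.pi fun i => ProbabilityTheory.gaussianReal (θ i) 1

/-- The class `ℓ₀[s]` of `s`-sparse vectors. -/
def ell0 (n s : ℕ) : Set (Fin n → ℝ) := {θ | Nat.card {i : Fin n // θ i ≠ 0} ≤ s}

/-- Log-marginal likelihood for the SSL prior. -/
def logMargSSL {n : ℕ} (α : ℝ) (X : Fin n → ℝ) : ℝ :=
  ∑ i, Real.log ((1 - α) * g0 n (X i) + α * g1 (X i))

/-- `hahat` maximises the SSL log-marginal likelihood over `[𝒞 log n / n, 1]`. -/
def IsMMLESSL {n : ℕ} (Ccal : ℝ) (hahat : (Fin n → ℝ) → ℝ) : Prop :=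
  Measurable hahat ∧ ∀ X : Fin n → ℝ, hahat X ∈ Set.Icc (Ccal * Real.log n / n) 1 ∧
    ∀ α ∈ Set.Icc (Ccal * Real.log n / n) 1, logMargSSL α X ≤ logMargSSL (hahat X) X

/-- Expected SSL posterior squared `L²`-moment for the plug-in posterior. -/
def postRiskSSL {n : ℕ} (hahat : (Fin n → ℝ) → ℝ) (θ0 : Fin n → ℝ) : ℝ :=
  ∫ X, (∫ θ, (∑ i, (θ i - θ0 i) ^ 2) ∂(postSSL n (hahat X) X)) ∂(Pdata n θ0)

section
open MeasureTheory Real Set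

/-! ### Basic facts on the densities -/

lemma phi_pos (x : ℝ) : 0 < phi x := by unfold phi; positivity

lemma phi_cont : Continuous phi := by unfold phi; fun_prop

lemma phi_eq_pdf (x : ℝ) : phi x = ProbabilityTheory.gaussianPDFReal 0 1 x := by
  simp only [phi, ProbabilityTheory.gaussianPDFReal, NNReal.coe_one, mul_one, sub_zero]
  rw [div_eq_inv_mul]

lemma phi_integrable : Integrable phi := by
  have : phi = ProbabilityTheory.gaussianPDFReal 0 1 := funext phi_eq_pdf
  rw [this]; exact ProbabilityTheory.integrable_gaussianPDFReal 0 1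

lemma phi_integral : ∫ x, phi x = 1 := by
  have : phi = ProbabilityTheory.gaussianPDFReal 0 1 := funext phi_eq_pdf
  rw [this]; exact ProbabilityTheory.integral_gaussianPDFReal_eq_one 0 one_ne_zero

lemma one_le_sqrt_two_pi : 1 ≤ √(2 * π) := by
  rw [Real.one_le_sqrt]; linarith [Real.pi_gt_three]

lemma phi_le_exp (x : ℝ) : phi x ≤ exp (-x ^ 2 / 2) := by
  unfold phi
  exact div_le_self (exp_pos _).le one_le_sqrt_two_pi

lemma phi_le_one (x : ℝ) : phi x ≤ 1 := by
  refine (phi_le_exp x).trans ?_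
  rw [Real.exp_le_one_iff]; nlinarith [sq_nonneg x]

lemma phi_sub (x u : ℝ) : phi (x - u) = phi x * exp (x * u - u ^ 2 / 2) := by
  unfold phi
  rw [div_mul_eq_mul_div, ← Real.exp_add]
  congr 2; ring

lemma phi_antitone_abs {x y : ℝ} (h : |x| ≤ |y|) : phi y ≤ phi x := by
  unfold phi
  have := sq_le_sq.2 h
  gcongr

lemma lap_integral {b : ℝ} (hb : 0 < b) : ∫ u : ℝ, exp (-b * |u|) = 2 / b := by
  rw [integral_comp_abs (f := fun u => exp (-b * u))]
  rw [integral_exp_mul_Ioi (by linarith) 0]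
  simp; field_simp

lemma lap_integral_sq {b : ℝ} (hb : 0 < b) : ∫ u : ℝ, u ^ 2 * exp (-b * |u|) = 4 / b ^ 3 := by
  have : (fun u : ℝ => u ^ 2 * exp (-b * |u|)) = fun u => |u| ^ 2 * exp (-b * |u|) := by
    ext u; rw [sq_abs]
  rw [this, integral_comp_abs (f := fun u => u ^ 2 * exp (-b * u))]
  have h := Real.integral_rpow_mul_exp_neg_mul_Ioi (a := 3) (r := b) (by norm_num) hb
  have h2 : ∫ t in Ioi (0:ℝ), t ^ 2 * exp (-b * t) = ∫ t in Ioi (0:ℝ), t ^ ((3:ℝ) - 1) * exp (-(b * t)) := by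
    congr 1; ext t; norm_num
  rw [h2, h]
  have : Gamma 3 = 2 := by
    have := Real.Gamma_nat_eq_factorial 2
    norm_num at this ⊢
  rw [this]
  have : (1 / b) ^ (3:ℝ) = (1/b)^3 := by norm_cast
  rw [this]; field_simp; norm_num

lemma integrable_of_integral_ne {f : ℝ → ℝ} (h : ∫ x, f x ≠ 0) : Integrable f := by
  by_contra hc; exact h (integral_undef hc)

lemma lap_integrable {b : ℝ} (hb : 0 < b) : Integrable fun u : ℝ => exp (-b * |u|) :=
  integrable_of_integral_ne (by rw [lap_integral hb]; positivity)

lemma lap_integrable_sq {b : ℝ} (hb : 0 < b) : Integrable fun u : ℝ => u ^ 2 * exp (-b * |u|) :=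
  integrable_of_integral_ne (by rw [lap_integral_sq hb]; positivity)

lemma lam0_ge (n : ℕ) : 5 * (n : ℝ) ≤ lam0 n := by
  unfold lam0
  have := one_le_sqrt_two_pi
  have hn : (0:ℝ) ≤ n := Nat.cast_nonneg n
  nlinarith

lemma lam0_pos {n : ℕ} (hn : 0 < n) : 0 < lam0 n := by
  have := lam0_ge n
  have hn : (0:ℝ) < n := Nat.cast_pos.2 hn
  linarith

lemma gamma0_cont (n : ℕ) : Continuous (gamma0 n) := by unfold gamma0; fun_prop
lemma gamma0_pos {n : ℕ} (hn : 0 < n) (u : ℝ) : 0 < gamma0 n u := by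
  have := lam0_pos hn
  unfold gamma0; positivity
lemma gamma0_integrable {n : ℕ} (hn : 0 < n) : Integrable (gamma0 n) :=
  (lap_integrable (lam0_pos hn)).const_mul _
lemma gamma0_integral {n : ℕ} (hn : 0 < n) : ∫ u, gamma0 n u = 1 := by
  have := lam0_pos hn
  unfold gamma0
  rw [integral_const_mul, lap_integral this]; field_simp
lemma gamma0_sq_integrable {n : ℕ} (hn : 0 < n) : Integrable fun u => u ^ 2 * gamma0 n u := by
  refine ((lap_integrable_sq (lam0_pos hn)).const_mul (lam0 n / 2)).congr (ae_of_all _ fun u => ?_)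
  simp only [gamma0]; ring
lemma gamma0_sq_integral {n : ℕ} (hn : 0 < n) : ∫ u, u ^ 2 * gamma0 n u = 2 / lam0 n ^ 2 := by
  have := lam0_pos hn
  have h : (fun u => u ^ 2 * gamma0 n u) = fun u => lam0 n / 2 * (u ^ 2 * exp (-(lam0 n) * |u|)) := by
    ext u; simp only [gamma0]; ring
  rw [h, integral_const_mul, lap_integral_sq this]; field_simp; norm_num
lemma gamma0_neg (n : ℕ) (u : ℝ) : gamma0 n (-u) = gamma0 n u := by simp [gamma0]
lemma gamma0_id_integrable {n : ℕ} (hn : 0 < n) : Integrable fun u => u * gamma0 n u := by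
  refine ((gamma0_integrable hn).add (gamma0_sq_integrable hn)).mono'
    (by have := gamma0_cont n; fun_prop) (ae_of_all _ fun u => ?_)
  have := gamma0_pos hn u
  simp only [norm_mul, Real.norm_eq_abs, abs_of_pos this, Pi.add_apply]
  have h : |u| ≤ 1 + u ^ 2 := by rw [← sq_abs]; nlinarith [sq_nonneg (|u| - 1), abs_nonneg u]
  nlinarith
lemma gamma0_id_integral (n : ℕ) : ∫ u, u * gamma0 n u = 0 := by
  have h := integral_neg_eq_self (fun u => u * gamma0 n u) volume
  simp only [gamma0_neg, neg_mul] at h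
  rw [integral_neg] at h; linarith

lemma gamma1_cont : Continuous gamma1 := by
  unfold gamma1
  refine Continuous.mul continuous_const (Continuous.inv₀ (by fun_prop) fun x => ?_)
  positivity
lemma gamma1_pos (u : ℝ) : 0 < gamma1 u := by
  unfold gamma1 lam1; positivity
lemma gamma1_eq : gamma1 = fun x => lam1 / π * ((1 + (lam1 * x) ^ 2)⁻¹) := by
  ext x; simp only [gamma1, mul_pow]
lemma gamma1_integral : ∫ u, gamma1 u = 1 := by
  rw [gamma1_eq, integral_const_mul,
    Measure.integral_comp_mul_left (fun x : ℝ => (1 + x ^ 2)⁻¹) lam1, integral_univ_inv_one_add_sq]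
  have := Real.pi_pos
  have h : (0:ℝ) < lam1 := by norm_num [lam1]
  rw [abs_of_pos (by positivity), smul_eq_mul]
  field_simp
lemma gamma1_integrable : Integrable gamma1 :=
  integrable_of_integral_ne (by rw [gamma1_integral]; norm_num)

/-- Peetre-type lower bound. -/
lemma gamma1_lower (x w : ℝ) : 1 / 200 * ((1 + x ^ 2)⁻¹ * (1 + w ^ 2)⁻¹) ≤ gamma1 (x - w) := by
  have h : gamma1 (x - w) = 20 / (π * (400 + (x - w) ^ 2)) := by
    unfold gamma1 lam1; field_simp; ring
  rw [h, ← mul_inv, le_div_iff₀ (by positivity)]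
  rw [← div_eq_mul_inv, div_mul_eq_mul_div, div_le_iff₀ (by positivity)]
  have h4 : π ≤ 4 := Real.pi_le_four
  have : 400 + (x - w) ^ 2 ≤ 402 * ((1 + x ^ 2) * (1 + w ^ 2)) := by
    nlinarith [sq_nonneg (x + w), sq_nonneg (x * w), sq_nonneg x, sq_nonneg w]
  have h2 : π * (400 + (x - w) ^ 2) ≤ 4 * (402 * ((1 + x ^ 2) * (1 + w ^ 2))) :=
    mul_le_mul h4 this (by positivity) (by norm_num)
  have : 0 ≤ (1 + x ^ 2) * (1 + w ^ 2) := by positivity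
  linarith

lemma gamma1_upper (x w : ℝ) : gamma1 (x - w) ≤ 20 * ((1 + x ^ 2)⁻¹ * (1 + w ^ 2)) := by
  have h : gamma1 (x - w) = 20 / (π * (400 + (x - w) ^ 2)) := by
    unfold gamma1 lam1; field_simp; ring
  rw [h, inv_mul_eq_div, mul_div_assoc', div_le_div_iff₀ (by positivity) (by positivity)]
  have h4 : 3 ≤ π := Real.pi_gt_three.le
  have : (1 + x ^ 2) ≤ (1 + w ^ 2) * (3 * (400 + (x - w) ^ 2)) := by
    nlinarith [sq_nonneg (x - 2 * w), sq_nonneg (w * (x - w)), sq_nonneg x, sq_nonneg w,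
      sq_nonneg (x - w)]
  have h2 : (1 + w ^ 2) * (3 * (400 + (x - w) ^ 2)) ≤ (1 + w ^ 2) * (π * (400 + (x - w) ^ 2)) := by
    gcongr
  linarith

end

section
open MeasureTheory Real Set

/-! ### Marginal densities -/

lemma poly_le_exp (x : ℝ) : (1 + x ^ 2) ^ 2 ≤ 256 * exp (x ^ 2 / 8) := by
  have h1 : (1 + x ^ 2) / 16 ≤ exp (x ^ 2 / 16) := by
    have := Real.add_one_le_exp (x ^ 2 / 16); linarith
  have h2 : exp (x ^ 2 / 8) = exp (x ^ 2 / 16) ^ 2 := by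
    rw [← Real.exp_nat_mul]; congr 1; push_cast; ring
  rw [h2]
  have : ((1 + x ^ 2) / 16) ^ 2 ≤ exp (x ^ 2 / 16) ^ 2 := by gcongr
  nlinarith

lemma poly_phi_integrable : Integrable fun w : ℝ => (1 + w ^ 2) ^ 2 * phi w := by
  refine ((integrable_exp_neg_mul_sq (b := 3 / 8) (by norm_num)).const_mul 256).mono'
    (by have := phi_cont; fun_prop) (ae_of_all _ fun w => ?_)
  have h0 := phi_pos w
  rw [Real.norm_eq_abs, abs_of_nonneg (by positivity)]
  calc (1 + w ^ 2) ^ 2 * phi w ≤ (256 * exp (w ^ 2 / 8)) * exp (-w ^ 2 / 2) :=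
        mul_le_mul (poly_le_exp w) (phi_le_exp w) h0.le (by positivity)
    _ = 256 * exp (-(3 / 8) * w ^ 2) := by
        rw [mul_assoc, ← Real.exp_add]; congr 2; ring

/-- Gaussian moment constant. -/
def Mphi : ℝ := ∫ w, (1 + w ^ 2) ^ 2 * phi w

/-- Gaussian constant for the lower bound on `g1`. -/
def cphi : ℝ := ∫ w, (1 + w ^ 2)⁻¹ * phi w

lemma inv_phi_integrable : Integrable fun w : ℝ => (1 + w ^ 2)⁻¹ * phi w := by
  refine phi_integrable.mono' ?_ (ae_of_all _ fun w => ?_)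
  · refine Continuous.aestronglyMeasurable (Continuous.mul ?_ phi_cont)
    exact Continuous.inv₀ (by fun_prop) fun x => by positivity
  · have h0 := phi_pos w
    rw [Real.norm_eq_abs, abs_of_nonneg (by positivity)]
    have : (1 + w ^ 2)⁻¹ ≤ 1 := inv_le_one_of_one_le₀ (by nlinarith [sq_nonneg w])
    nlinarith

lemma cphi_pos : 0 < cphi := by
  unfold cphi
  rw [integral_pos_iff_support_of_nonneg _ inv_phi_integrable]
  · have : Function.support (fun w : ℝ => (1 + w ^ 2)⁻¹ * phi w) = univ := by
      ext w; have := phi_pos w; simp only [Function.mem_support, mem_univ, iff_true]; positivity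
    rw [this]; simp
  · intro w; have := phi_pos w; simp only [Pi.zero_apply]; positivity

lemma one_le_Mphi : 1 ≤ Mphi := by
  rw [← phi_integral]
  refine integral_mono phi_integrable poly_phi_integrable fun w => ?_
  have h0 := phi_pos w
  have : 1 ≤ (1 + w ^ 2) ^ 2 := by nlinarith [sq_nonneg w, sq_nonneg (w ^ 2)]
  simp only; nlinarith

lemma conv_integrable {γ : ℝ → ℝ} (hγ : Integrable γ) (x : ℝ) :
    Integrable fun u => phi (x - u) * γ u := by
  refine hγ.bdd_mul (c := 1) ?_ (ae_of_all _ fun u => ?_)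
  · exact (phi_cont.comp (by fun_prop)).aestronglyMeasurable
  · rw [Real.norm_eq_abs, abs_of_pos (phi_pos _)]; exact phi_le_one _

lemma sq_mul_phi_le (w : ℝ) : w ^ 2 * phi w ≤ 2 := by
  have h := Real.add_one_le_exp (w ^ 2 / 2)
  have h2 := phi_le_exp w
  have h3 : w ^ 2 * exp (-w ^ 2 / 2) ≤ 2 := by
    rw [neg_div, Real.exp_neg, ← div_eq_mul_inv, div_le_iff₀ (exp_pos _)]; linarith
  nlinarith [sq_nonneg w]

lemma conv_sq_integrable {γ : ℝ → ℝ} (hγ : Integrable γ) (x μ : ℝ) :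
    Integrable fun u => (u - μ) ^ 2 * (phi (x - u) * γ u) := by
  have : (fun u => (u - μ) ^ 2 * (phi (x - u) * γ u))
      = fun u => ((u - μ) ^ 2 * phi (x - u)) * γ u := by ext u; ring
  rw [this]
  refine hγ.bdd_mul (c := 2 * (x - μ) ^ 2 + 4) ?_ (ae_of_all _ fun u => ?_)
  · refine Continuous.aestronglyMeasurable (Continuous.mul (by fun_prop) ?_)
    exact phi_cont.comp (by fun_prop)
  · have h0 := phi_pos (x - u)
    rw [Real.norm_eq_abs, abs_of_nonneg (by positivity)]
    have h1 := phi_le_one (x - u)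
    have h2 := sq_mul_phi_le (x - u)
    have h3 : (u - μ) ^ 2 ≤ 2 * (x - μ) ^ 2 + 2 * (x - u) ^ 2 := by
      nlinarith [sq_nonneg ((x - μ) + (x - u))]
    nlinarith [sq_nonneg (x - μ)]

lemma conv_total {γ : ℝ → ℝ} (hγ : Integrable γ) :
    Integrable (fun x => ∫ u, phi (x - u) * γ u) ∧
      ∫ x, (∫ u, phi (x - u) * γ u) = ∫ u, γ u := by
  have he : (fun x => ∫ u, phi (x - u) * γ u)
      = convolution γ phi (ContinuousLinearMap.mul ℝ ℝ) volume := by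
    ext x; simp only [convolution, ContinuousLinearMap.mul_apply']
    congr 1; ext u; ring
  rw [he]
  refine ⟨hγ.integrable_convolution _ phi_integrable, ?_⟩
  rw [integral_convolution _ hγ phi_integrable]
  simp [phi_integral]

lemma g0_integrable {n : ℕ} (hn : 0 < n) : Integrable (g0 n) := (conv_total (gamma0_integrable hn)).1
lemma g0_integral {n : ℕ} (hn : 0 < n) : ∫ x, g0 n x = 1 :=
  (conv_total (gamma0_integrable hn)).2.trans (gamma0_integral hn)
lemma g1_integrable : Integrable g1 := (conv_total gamma1_integrable).1
lemma g1_integral : ∫ x, g1 x = 1 := (conv_total gamma1_integrable).2.trans gamma1_integral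

lemma conv_meas {γ : ℝ → ℝ} (hγ : Continuous γ) :
    Measurable (fun x => ∫ u, phi (x - u) * γ u) := by
  have : StronglyMeasurable (Function.uncurry fun x u : ℝ => phi (x - u) * γ u) := by
    apply Continuous.stronglyMeasurable
    have := phi_cont
    simp only [Function.uncurry_def]
    fun_prop
  exact this.integral_prod_right.measurable

lemma g0_meas (n : ℕ) : Measurable (g0 n) := conv_meas (gamma0_cont n)
lemma g1_meas : Measurable g1 := conv_meas gamma1_cont

lemma conv_swap (f : ℝ → ℝ) (x : ℝ) : ∫ u, f u = ∫ w, f (x - w) :=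
  (integral_sub_left_eq_self f volume x).symm

lemma g1_lower (x : ℝ) : cphi / 200 * (1 + x ^ 2)⁻¹ ≤ g1 x := by
  have hi := conv_integrable gamma1_integrable x
  have e : g1 x = ∫ w, phi w * gamma1 (x - w) := by
    unfold g1; rw [conv_swap _ x]; simp
  have e2 : cphi / 200 * (1 + x ^ 2)⁻¹
      = ∫ w, (1 / 200 * (1 + x ^ 2)⁻¹) * ((1 + w ^ 2)⁻¹ * phi w) := by
    rw [integral_const_mul]; unfold cphi; ring
  rw [e, e2]
  refine integral_mono (inv_phi_integrable.const_mul _) ?_ fun w => ?_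
  · have := hi.comp_sub_left x; simpa using this
  · have h0 := phi_pos w
    have := gamma1_lower x w
    simp only
    nlinarith

lemma g1_pos (x : ℝ) : 0 < g1 x :=
  lt_of_lt_of_le (by have := cphi_pos; positivity) (g1_lower x)

lemma g1_upper (x : ℝ) : g1 x ≤ 20 * Mphi * (1 + x ^ 2)⁻¹ := by
  have hi := conv_integrable gamma1_integrable x
  have e : g1 x = ∫ w, phi w * gamma1 (x - w) := by
    unfold g1; rw [conv_swap _ x]; simp
  have e2 : 20 * Mphi * (1 + x ^ 2)⁻¹
      = ∫ w, (20 * (1 + x ^ 2)⁻¹) * ((1 + w ^ 2) ^ 2 * phi w) := by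
    rw [integral_const_mul]; unfold Mphi; ring
  rw [e, e2]
  refine integral_mono ?_ (poly_phi_integrable.const_mul _) fun w => ?_
  · have := hi.comp_sub_left x; simpa using this
  · have h0 := phi_pos w
    have h := gamma1_upper x w
    simp only
    have h2 : (1 + w ^ 2) ≤ (1 + w ^ 2) ^ 2 := by nlinarith [sq_nonneg w, sq_nonneg (w ^ 2)]
    calc phi w * gamma1 (x - w) ≤ phi w * (20 * ((1 + x ^ 2)⁻¹ * (1 + w ^ 2) ^ 2)) := by
          refine mul_le_mul_of_nonneg_left (h.trans ?_) h0.le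
          gcongr
      _ = _ := by ring

lemma g1_sq_upper (x : ℝ) :
    ∫ u, (u - x) ^ 2 * (phi (x - u) * gamma1 u) ≤ 20 * Mphi * (1 + x ^ 2)⁻¹ := by
  have hi := conv_sq_integrable gamma1_integrable x x
  have e2 : 20 * Mphi * (1 + x ^ 2)⁻¹
      = ∫ w, (20 * (1 + x ^ 2)⁻¹) * ((1 + w ^ 2) ^ 2 * phi w) := by
    rw [integral_const_mul]; unfold Mphi; ring
  rw [conv_swap _ x, e2]
  refine integral_mono ?_ (poly_phi_integrable.const_mul _) fun w => ?_
  · exact hi.comp_sub_left x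
  · have h0 := phi_pos w
    have h := gamma1_upper x w
    simp only [sub_sub_cancel]
    have h2 : w ^ 2 * (1 + w ^ 2) ≤ (1 + w ^ 2) ^ 2 := by nlinarith [sq_nonneg w, sq_nonneg (w ^ 2)]
    calc (x - w - x) ^ 2 * (phi w * gamma1 (x - w))
        ≤ (x - w - x) ^ 2 * (phi w * (20 * ((1 + x ^ 2)⁻¹ * (1 + w ^ 2)))) := by gcongr
      _ = (20 * (1 + x ^ 2)⁻¹) * ((w ^ 2 * (1 + w ^ 2)) * phi w) := by ring
      _ ≤ _ := by gcongr

/-- Second moment constant of the slab posterior. -/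
def K1 : ℝ := 4000 * Mphi / cphi

lemma K1_pos : 0 < K1 := by
  have := cphi_pos; have := one_le_Mphi; unfold K1; positivity

lemma g1_sq_ratio (x : ℝ) : ∫ u, (u - x) ^ 2 * (phi (x - u) * gamma1 u) ≤ K1 * g1 x := by
  refine (g1_sq_upper x).trans ?_
  have h := g1_lower x
  have hc := cphi_pos
  calc 20 * Mphi * (1 + x ^ 2)⁻¹ = K1 * (cphi / 200 * (1 + x ^ 2)⁻¹) := by
        unfold K1; field_simp; ring
    _ ≤ _ := mul_le_mul_of_nonneg_left h K1_pos.le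

lemma g0_lower' {n : ℕ} (hn : 0 < n) (x : ℝ) : phi x * (1 - 1 / lam0 n ^ 2) ≤ g0 n x := by
  have h0 := gamma0_integrable hn
  have h1 := gamma0_id_integrable hn
  have h2 := gamma0_sq_integrable hn
  have hp := phi_pos x
  have e : phi x * (1 - 1 / lam0 n ^ 2)
      = ∫ u, phi x * (gamma0 n u + x * (u * gamma0 n u) - 1 / 2 * (u ^ 2 * gamma0 n u)) := by
    have h01 : Integrable fun u => gamma0 n u + x * (u * gamma0 n u) := h0.add (h1.const_mul x)
    rw [integral_const_mul, integral_sub h01 (h2.const_mul _),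
      integral_add h0 (h1.const_mul x), integral_const_mul, integral_const_mul,
      gamma0_integral hn, gamma0_id_integral, gamma0_sq_integral hn]
    congr 1; ring
  rw [e]; unfold g0
  refine integral_mono (((h0.add (h1.const_mul x)).sub (h2.const_mul _)).const_mul _)
    (conv_integrable h0 x) fun u => ?_
  simp only
  rw [phi_sub]
  have hg := gamma0_pos hn u
  have := Real.add_one_le_exp (x * u - u ^ 2 / 2)
  calc phi x * (gamma0 n u + x * (u * gamma0 n u) - 1 / 2 * (u ^ 2 * gamma0 n u))
      = phi x * (x * u - u ^ 2 / 2 + 1) * gamma0 n u := by ring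
    _ ≤ _ := by gcongr

lemma g0_lower {n : ℕ} (hn : 0 < n) (x : ℝ) : phi x ≤ (1 + 1 / n) * g0 n x := by
  have h := g0_lower' hn x
  have hn1 : (1:ℝ) ≤ n := by exact_mod_cast hn
  have hl := lam0_ge n
  have hp := phi_pos x
  have h1 : 1 / lam0 n ^ 2 ≤ 1 / (2 * n) := by
    apply one_div_le_one_div_of_le (by positivity)
    nlinarith
  have h3 : phi x * (1 - 1 / (2 * n)) ≤ g0 n x := le_trans (by gcongr) h
  have h4 : (1:ℝ) ≤ (1 + 1 / n) * (1 - 1 / (2 * n)) := by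
    have : (1 + 1 / (n:ℝ)) * (1 - 1 / (2 * n)) = 1 + (n - 1) / (2 * n ^ 2) := by field_simp; ring
    rw [this]
    have : 0 ≤ ((n:ℝ) - 1) / (2 * n ^ 2) := div_nonneg (by linarith) (by positivity)
    linarith
  calc phi x ≤ ((1 + 1 / n) * (1 - 1 / (2 * n))) * phi x := by nlinarith
    _ = (1 + 1 / n) * (phi x * (1 - 1 / (2 * n))) := by ring
    _ ≤ _ := by gcongr

lemma g0_pos {n : ℕ} (hn : 0 < n) (x : ℝ) : 0 < g0 n x := by
  have h := g0_lower hn x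
  have hp := phi_pos x
  by_contra hc
  have : (0:ℝ) < 1 + 1 / n := by positivity
  nlinarith

lemma g0_lower_two {n : ℕ} (hn : 0 < n) (x : ℝ) : phi x ≤ 2 * g0 n x := by
  have hn1 : (1:ℝ) ≤ n := by exact_mod_cast hn
  refine (g0_lower hn x).trans ?_
  have : 1 / (n:ℝ) ≤ 1 := by rw [div_le_one (by positivity)]; exact hn1
  have := g0_pos hn x
  gcongr; linarith

lemma g0_upper {n : ℕ} (hn : 0 < n) (x : ℝ) : g0 n x ≤ phi (x / 2) + gamma0 n (x / 2) := by
  have h0 := gamma0_integrable hn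
  have hs : Integrable fun u => phi (x - u) := phi_integrable.comp_sub_left x
  have e : phi (x / 2) + gamma0 n (x / 2)
      = ∫ u, (phi (x / 2) * gamma0 n u + gamma0 n (x / 2) * phi (x - u)) := by
    rw [integral_add (h0.const_mul _) (hs.const_mul _), integral_const_mul, integral_const_mul,
      gamma0_integral hn, integral_sub_left_eq_self phi volume x, phi_integral]; ring
  rw [e]; unfold g0
  refine integral_mono (conv_integrable h0 x) ((h0.const_mul _).add (hs.const_mul _)) fun u => ?_
  simp only
  have p1 := phi_pos (x - u)
  have p2 := phi_pos (x / 2)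
  have p3 := gamma0_pos hn u
  have p4 := gamma0_pos hn (x / 2)
  have e2 : |x / 2| = |x| / 2 := by rw [abs_div]; norm_num
  rcases le_total |u| |x / 2| with h | h
  · have : phi (x - u) ≤ phi (x / 2) := by
      apply phi_antitone_abs
      have := abs_sub_abs_le_abs_sub x u
      linarith
    have : phi (x - u) * gamma0 n u ≤ phi (x / 2) * gamma0 n u := by gcongr
    have : 0 < gamma0 n (x / 2) * phi (x - u) := by positivity
    linarith
  · have : gamma0 n u ≤ gamma0 n (x / 2) := by
      have := lam0_pos hn
      unfold gamma0
      gcongr _ * exp ?_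
      nlinarith
    have : phi (x - u) * gamma0 n u ≤ phi (x - u) * gamma0 n (x / 2) := by gcongr
    have : 0 < phi (x / 2) * gamma0 n u := by positivity
    linarith

lemma g0_sq_crude {n : ℕ} (hn : 0 < n) (x : ℝ) :
    ∫ u, u ^ 2 * (phi (x - u) * gamma0 n u) ≤ (16 * x ^ 2 + 8) * g0 n x := by
  have h0 := gamma0_integrable hn
  have hc := conv_integrable h0 x
  have hs := conv_sq_integrable h0 x 0
  simp only [sub_zero] at hs
  have h1 : ∫ u, u ^ 2 * (phi (x - u) * gamma0 n u)
      ≤ ∫ u, (16 * x ^ 2 * (phi (x - u) * gamma0 n u) + 4 * phi x * gamma0 n u) := by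
    refine integral_mono hs ((hc.const_mul _).add (h0.const_mul _)) fun u => ?_
    simp only
    have p1 := phi_pos (x - u)
    have p2 := phi_pos x
    have p3 := gamma0_pos hn u
    rcases le_total |u| |4 * x| with h | h
    · have := sq_le_sq.2 h
      have : u ^ 2 * (phi (x - u) * gamma0 n u) ≤ 16 * x ^ 2 * (phi (x - u) * gamma0 n u) := by
        gcongr; linarith
      have : 0 < 4 * phi x * gamma0 n u := by positivity
      linarith
    · have hxu : x * u ≤ u ^ 2 / 4 := by
        have a1 : |4 * x| * |u| ≤ |u| * |u| := by gcongr
        rw [← abs_mul, ← abs_mul, ← sq, abs_of_nonneg (sq_nonneg u)] at a1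
        have := le_abs_self (4 * x * u)
        linarith
      have : u ^ 2 * phi (x - u) ≤ 4 * phi x := by
        rw [phi_sub]
        have b1 : exp (x * u - u ^ 2 / 2) ≤ exp (-(u ^ 2 / 4)) := by
          apply Real.exp_le_exp.2; linarith
        have b2 : u ^ 2 * exp (-(u ^ 2 / 4)) ≤ 4 := by
          rw [Real.exp_neg, ← div_eq_mul_inv, div_le_iff₀ (exp_pos _)]
          linarith [Real.add_one_le_exp (u ^ 2 / 4)]
        calc u ^ 2 * (phi x * exp (x * u - u ^ 2 / 2))
            ≤ u ^ 2 * (phi x * exp (-(u ^ 2 / 4))) := by gcongr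
          _ = phi x * (u ^ 2 * exp (-(u ^ 2 / 4))) := by ring
          _ ≤ phi x * 4 := by gcongr
          _ = _ := by ring
      have : (u ^ 2 * phi (x - u)) * gamma0 n u ≤ 4 * phi x * gamma0 n u := by gcongr
      have : 0 ≤ 16 * x ^ 2 * (phi (x - u) * gamma0 n u) := by positivity
      linarith
  rw [integral_add (hc.const_mul _) (h0.const_mul _), integral_const_mul, integral_const_mul,
    gamma0_integral hn] at h1
  have := g0_lower_two hn x
  change _ ≤ 16 * x ^ 2 * g0 n x + _ at h1
  linarith

lemma g0_sq_fine {n : ℕ} (hn : 0 < n) {x : ℝ} (hx : |x| ≤ lam0 n / 2) :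
    ∫ u, u ^ 2 * (phi (x - u) * gamma0 n u) ≤ 32 / lam0 n ^ 2 * g0 n x := by
  have h0 := gamma0_integrable hn
  have hl := lam0_pos hn
  have hs := conv_sq_integrable h0 x 0
  simp only [sub_zero] at hs
  have h1 : ∫ u, u ^ 2 * (phi (x - u) * gamma0 n u)
      ≤ ∫ u, (phi x * (lam0 n / 2)) * (u ^ 2 * exp (-(lam0 n / 2) * |u|)) := by
    refine integral_mono hs ((lap_integrable_sq (by positivity)).const_mul _) fun u => ?_
    simp only
    have p2 := phi_pos x
    rw [phi_sub]
    unfold gamma0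
    have a : exp (x * u - u ^ 2 / 2) * exp (-(lam0 n) * |u|) ≤ exp (-(lam0 n / 2) * |u|) := by
      rw [← Real.exp_add]; apply Real.exp_le_exp.2
      have b1 : x * u ≤ |x| * |u| := by rw [← abs_mul]; exact le_abs_self _
      have b2 : |x| * |u| ≤ lam0 n / 2 * |u| := by gcongr
      nlinarith [sq_nonneg u]
    calc u ^ 2 * (phi x * exp (x * u - u ^ 2 / 2) * (lam0 n / 2 * exp (-lam0 n * |u|)))
        = phi x * (lam0 n / 2) * (u ^ 2 * (exp (x * u - u ^ 2 / 2) * exp (-(lam0 n) * |u|))) := by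
          ring
      _ ≤ _ := by gcongr
  rw [integral_const_mul, lap_integral_sq (by positivity)] at h1
  have := g0_lower_two hn x
  refine h1.trans ?_
  calc phi x * (lam0 n / 2) * (4 / (lam0 n / 2) ^ 3) = phi x * (16 / lam0 n ^ 2) := by
        field_simp; ring
    _ ≤ (2 * g0 n x) * (16 / lam0 n ^ 2) := by gcongr
    _ = _ := by ring

lemma g0_sq_null {n : ℕ} (hn : 0 < n) (x : ℝ) :
    ∫ u, u ^ 2 * (phi (x - u) * gamma0 n u) ≤ 16 * (1 + x ^ 2) ^ 2 / n * g0 n x := by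
  have hg := g0_pos hn x
  have hl := lam0_ge n
  have hn1 : (1:ℝ) ≤ n := by exact_mod_cast hn
  rcases le_total |x| (lam0 n / 2) with h | h
  · refine (g0_sq_fine hn h).trans ?_
    gcongr ?_ * _
    have : lam0 n ^ 2 ≥ 2 * n := by nlinarith
    calc 32 / lam0 n ^ 2 ≤ 32 / (2 * n) := by gcongr
      _ = 16 * 1 / n := by field_simp; norm_num
      _ ≤ _ := by gcongr; nlinarith [sq_nonneg x, sq_nonneg (x ^ 2)]
  · refine (g0_sq_crude hn x).trans ?_
    gcongr ?_ * _
    rw [le_div_iff₀ (by positivity)]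
    have : (n:ℝ) ≤ 1 + x ^ 2 := by rw [← sq_abs]; nlinarith
    nlinarith [sq_nonneg x]

end

section
open MeasureTheory Real Set

/-! ### The one-coordinate posterior -/

lemma marg_pos {n : ℕ} (hn : 0 < n) {α : ℝ} (h0 : 0 ≤ α) (h1 : α ≤ 1) (x : ℝ) :
    0 < (1 - α) * g0 n x + α * g1 x := by
  have p0 := g0_pos hn x
  have p1 := g1_pos x
  rcases eq_or_lt_of_le h0 with h | h
  · rw [← h]; simpa using p0
  · have : 0 ≤ (1 - α) * g0 n x := mul_nonneg (by linarith) p0.le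
    have : 0 < α * g1 x := by positivity
    linarith

lemma aSSL_nonneg {n : ℕ} (hn : 0 < n) {α : ℝ} (h0 : 0 ≤ α) (h1 : α ≤ 1) (x : ℝ) :
    0 ≤ aSSL n α x := by
  have := g1_pos x
  exact div_nonneg (by positivity) (marg_pos hn h0 h1 x).le

lemma aSSL_le_one {n : ℕ} (hn : 0 < n) {α : ℝ} (h0 : 0 ≤ α) (h1 : α ≤ 1) (x : ℝ) :
    aSSL n α x ≤ 1 := by
  have p0 := g0_pos hn x
  refine (div_le_one (marg_pos hn h0 h1 x)).2 ?_
  have : 0 ≤ (1 - α) * g0 n x := mul_nonneg (by linarith) p0.le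
  linarith

/-- Lebesgue density of the one-coordinate posterior. -/
def postDen (n : ℕ) (α x u : ℝ) : ℝ :=
  (1 - aSSL n α x) * (phi (x - u) * gamma0 n u / g0 n x)
      + aSSL n α x * (phi (x - u) * gamma1 u / g1 x)

lemma postDen_nonneg {n : ℕ} (hn : 0 < n) {α : ℝ} (h0 : 0 ≤ α) (h1 : α ≤ 1) (x u : ℝ) :
    0 ≤ postDen n α x u := by
  have a0 := aSSL_nonneg hn h0 h1 x
  have a1 := aSSL_le_one hn h0 h1 x
  have p0 := g0_pos hn x
  have p1 := g1_pos x
  have q0 := gamma0_pos hn u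
  have q1 := gamma1_pos u
  have := phi_pos (x - u)
  have : 0 ≤ 1 - aSSL n α x := by linarith
  unfold postDen; positivity

lemma postDen_cont (n : ℕ) (α x : ℝ) : Continuous (postDen n α x) := by
  unfold postDen
  have := phi_cont
  have := gamma0_cont n
  have := gamma1_cont
  fun_prop

lemma postDen_moment {n : ℕ} (hn : 0 < n) (α x μ : ℝ) :
    Integrable (fun u => postDen n α x u * (u - μ) ^ 2) ∧
    ∫ u, postDen n α x u * (u - μ) ^ 2
      = (1 - aSSL n α x) * ((∫ u, (u - μ) ^ 2 * (phi (x - u) * gamma0 n u)) / g0 n x)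
        + aSSL n α x * ((∫ u, (u - μ) ^ 2 * (phi (x - u) * gamma1 u)) / g1 x) := by
  have i0 := conv_sq_integrable (gamma0_integrable hn) x μ
  have i1 := conv_sq_integrable gamma1_integrable x μ
  have e : (fun u => postDen n α x u * (u - μ) ^ 2) = fun u =>
      ((1 - aSSL n α x) / g0 n x) * ((u - μ) ^ 2 * (phi (x - u) * gamma0 n u))
      + (aSSL n α x / g1 x) * ((u - μ) ^ 2 * (phi (x - u) * gamma1 u)) := by
    ext u; unfold postDen; ring
  rw [e]
  refine ⟨(i0.const_mul _).add (i1.const_mul _), ?_⟩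
  rw [integral_add (i0.const_mul _) (i1.const_mul _), integral_const_mul, integral_const_mul]
  ring

lemma postDen_total {n : ℕ} (hn : 0 < n) (α x : ℝ) :
    Integrable (postDen n α x) ∧ ∫ u, postDen n α x u = 1 := by
  have i0 := conv_integrable (gamma0_integrable hn) x
  have i1 := conv_integrable gamma1_integrable x
  have p0 := g0_pos hn x
  have p1 := g1_pos x
  have e : (postDen n α x) = fun u =>
      ((1 - aSSL n α x) / g0 n x) * (phi (x - u) * gamma0 n u)
      + (aSSL n α x / g1 x) * (phi (x - u) * gamma1 u) := by
    ext u; unfold postDen; ring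
  rw [e]
  refine ⟨(i0.const_mul _).add (i1.const_mul _), ?_⟩
  rw [integral_add (i0.const_mul _) (i1.const_mul _), integral_const_mul, integral_const_mul]
  change (1 - aSSL n α x) / g0 n x * g0 n x + aSSL n α x / g1 x * g1 x = 1
  field_simp; ring

lemma coordPost_prob {n : ℕ} (hn : 0 < n) {α : ℝ} (h0 : 0 ≤ α) (h1 : α ≤ 1) (x : ℝ) :
    IsProbabilityMeasure (coordPostSSL n α x) := by
  obtain ⟨hi, ht⟩ := postDen_total hn α x
  constructor
  unfold coordPostSSL
  rw [withDensity_apply _ MeasurableSet.univ, Measure.restrict_univ]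
  change ∫⁻ u, ENNReal.ofReal (postDen n α x u) = 1
  rw [← ofReal_integral_eq_lintegral_ofReal hi (ae_of_all _ (postDen_nonneg hn h0 h1 x)), ht]
  simp

/-- One-coordinate posterior risk. -/
def cRisk (n : ℕ) (α x μ : ℝ) : ℝ :=
  (1 - aSSL n α x) * ((∫ u, (u - μ) ^ 2 * (phi (x - u) * gamma0 n u)) / g0 n x)
        + aSSL n α x * ((∫ u, (u - μ) ^ 2 * (phi (x - u) * gamma1 u)) / g1 x)

lemma coordPost_moment {n : ℕ} (hn : 0 < n) {α : ℝ} (h0 : 0 ≤ α) (h1 : α ≤ 1) (x μ : ℝ) :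
    Integrable (fun u => (u - μ) ^ 2) (coordPostSSL n α x) ∧
    ∫ u, (u - μ) ^ 2 ∂(coordPostSSL n α x) = cRisk n α x μ := by
  obtain ⟨hi, ht⟩ := postDen_moment hn α x μ
  have hm : Measurable fun u => ENNReal.ofReal (postDen n α x u) :=
    (postDen_cont n α x).measurable.ennreal_ofReal
  have htop : ∀ᵐ u ∂(volume : Measure ℝ), ENNReal.ofReal (postDen n α x u) < ⊤ :=
    ae_of_all _ fun u => ENNReal.ofReal_lt_top
  have e : ∀ u, (ENNReal.ofReal (postDen n α x u)).toReal = postDen n α x u := fun u =>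
    ENNReal.toReal_ofReal (postDen_nonneg hn h0 h1 x u)
  have hd : coordPostSSL n α x = volume.withDensity fun u => ENNReal.ofReal (postDen n α x u) := rfl
  rw [hd]
  constructor
  · rw [integrable_withDensity_iff hm htop]
    simp only [e]
    refine hi.congr (ae_of_all _ fun u => ?_); simp only; ring
  · rw [integral_withDensity_eq_integral_toReal_smul hm htop]
    simp only [e, smul_eq_mul]
    exact ht

lemma post_moment {n : ℕ} (hn : 0 < n) {α : ℝ} (h0 : 0 ≤ α) (h1 : α ≤ 1) (X θ0 : Fin n → ℝ) :
    ∫ θ, (∑ i, (θ i - θ0 i) ^ 2) ∂(postSSL n α X) = ∑ i, cRisk n α (X i) (θ0 i) := by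
  have hp : ∀ i, IsProbabilityMeasure (coordPostSSL n α (X i)) := fun i => coordPost_prob hn h0 h1 _
  unfold postSSL
  have hi : ∀ i, Integrable (fun θ : Fin n → ℝ => (θ i - θ0 i) ^ 2)
      (Measure.pi fun i => coordPostSSL n α (X i)) := fun i =>
    integrable_comp_eval (X := fun _ : Fin n => ℝ) (μ := fun i => coordPostSSL n α (X i)) (i := i)
      (f := fun u : ℝ => (u - θ0 i) ^ 2) (coordPost_moment hn h0 h1 (X i) (θ0 i)).1
  rw [integral_finsetSum _ fun i _ => hi i]
  refine Finset.sum_congr rfl fun i _ => ?_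
  rw [integral_comp_eval (μ := fun i => coordPostSSL n α (X i)) (f := fun u => (u - θ0 i) ^ 2)
    (coordPost_moment hn h0 h1 (X i) (θ0 i)).1.aestronglyMeasurable]
  exact (coordPost_moment hn h0 h1 (X i) (θ0 i)).2

lemma cRisk_nonneg {n : ℕ} (hn : 0 < n) {α : ℝ} (h0 : 0 ≤ α) (h1 : α ≤ 1) (x μ : ℝ) :
    0 ≤ cRisk n α x μ := by
  rw [← (coordPost_moment hn h0 h1 x μ).2]
  exact integral_nonneg fun u => sq_nonneg _

lemma slab_moment (x μ : ℝ) :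
    (∫ u, (u - μ) ^ 2 * (phi (x - u) * gamma1 u)) / g1 x ≤ 2 * (x - μ) ^ 2 + 2 * K1 := by
  have p1 := g1_pos x
  rw [div_le_iff₀ p1]
  have i1 := conv_sq_integrable gamma1_integrable x x
  have i2 := conv_integrable gamma1_integrable x
  have : ∫ u, (u - μ) ^ 2 * (phi (x - u) * gamma1 u)
      ≤ ∫ u, (2 * (x - μ) ^ 2 * (phi (x - u) * gamma1 u)
        + 2 * ((u - x) ^ 2 * (phi (x - u) * gamma1 u))) := by
    refine integral_mono (conv_sq_integrable gamma1_integrable x μ)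
      ((i2.const_mul _).add (i1.const_mul _)) fun u => ?_
    simp only
    have q1 := gamma1_pos u
    have := phi_pos (x - u)
    have q : 0 ≤ phi (x - u) * gamma1 u := by positivity
    have h3 : (u - μ) ^ 2 ≤ 2 * (x - μ) ^ 2 + 2 * (u - x) ^ 2 := by
      nlinarith [sq_nonneg ((x - μ) - (u - x))]
    have := mul_le_mul_of_nonneg_right h3 q
    linarith
  rw [integral_add (i2.const_mul _) (i1.const_mul _), integral_const_mul, integral_const_mul] at this
  change _ ≤ 2 * (x - μ) ^ 2 * g1 x + _ at this
  linarith [g1_sq_ratio x]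

lemma spike_moment {n : ℕ} (hn : 0 < n) (x μ : ℝ) :
    (∫ u, (u - μ) ^ 2 * (phi (x - u) * gamma0 n u)) / g0 n x
      ≤ 2 * (x - μ) ^ 2 + (68 * x ^ 2 + 32) := by
  have p1 := g0_pos hn x
  rw [div_le_iff₀ p1]
  have hg := gamma0_integrable hn
  have i1 := conv_sq_integrable hg x 0
  have i2 := conv_integrable hg x
  simp only [sub_zero] at i1
  have : ∫ u, (u - μ) ^ 2 * (phi (x - u) * gamma0 n u)
      ≤ ∫ u, ((2 * (x - μ) ^ 2 + 4 * x ^ 2) * (phi (x - u) * gamma0 n u)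
        + 4 * (u ^ 2 * (phi (x - u) * gamma0 n u))) := by
    refine integral_mono (conv_sq_integrable hg x μ)
      ((i2.const_mul _).add (i1.const_mul _)) fun u => ?_
    simp only
    have q1 := gamma0_pos hn u
    have := phi_pos (x - u)
    have q : 0 ≤ phi (x - u) * gamma0 n u := by positivity
    have h3 : (u - μ) ^ 2 ≤ 2 * (x - μ) ^ 2 + 4 * x ^ 2 + 4 * u ^ 2 := by
      nlinarith [sq_nonneg ((x - μ) - (u - x)), sq_nonneg (u + x)]
    have := mul_le_mul_of_nonneg_right h3 q
    linarith
  rw [integral_add (i2.const_mul _) (i1.const_mul _), integral_const_mul, integral_const_mul] at this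
  change _ ≤ (2 * (x - μ) ^ 2 + 4 * x ^ 2) * g0 n x + _ at this
  linarith [g0_sq_crude hn x]

lemma cRisk_le {n : ℕ} (hn : 0 < n) {α : ℝ} (h0 : 0 ≤ α) (h1 : α ≤ 1) (x μ : ℝ) :
    cRisk n α x μ ≤ 2 * (x - μ) ^ 2 + (1 - aSSL n α x) * (68 * x ^ 2 + 32) + 2 * K1 := by
  have a0 := aSSL_nonneg hn h0 h1 x
  have a1 := aSSL_le_one hn h0 h1 x
  have b0 := mul_le_mul_of_nonneg_left (spike_moment hn x μ) (sub_nonneg.2 a1)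
  have b1 := mul_le_mul_of_nonneg_left (slab_moment x μ) a0
  have := K1_pos
  unfold cRisk
  nlinarith

/-- Crude risk constant. -/
def Kc : ℝ := 70 + 2 * K1

lemma Kc_pos : 0 < Kc := by have := K1_pos; unfold Kc; positivity

lemma cRisk_crude {n : ℕ} (hn : 0 < n) {α : ℝ} (h0 : 0 ≤ α) (h1 : α ≤ 1) (x : ℝ) :
    cRisk n α x 0 ≤ Kc * (1 + x ^ 2) := by
  have h := cRisk_le hn h0 h1 x 0
  have a0 := aSSL_nonneg hn h0 h1 x
  have : (1 - aSSL n α x) * (68 * x ^ 2 + 32) ≤ 68 * x ^ 2 + 32 := by nlinarith [sq_nonneg x]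
  have := K1_pos
  have : 0 ≤ K1 * x ^ 2 := by positivity
  unfold Kc
  rw [sub_zero] at h
  nlinarith [sq_nonneg x]

lemma cRisk_null {n : ℕ} (hn : 0 < n) {α : ℝ} (h0 : 0 ≤ α) (h1 : α ≤ 1) (x : ℝ) :
    cRisk n α x 0 ≤ 16 * (1 + x ^ 2) ^ 2 / n + aSSL n α x * ((2 + 2 * K1) * (1 + x ^ 2)) := by
  have a0 := aSSL_nonneg hn h0 h1 x
  have a1 := aSSL_le_one hn h0 h1 x
  have p0 := g0_pos hn x
  have := K1_pos
  unfold cRisk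
  have s0 : (∫ u, (u - 0) ^ 2 * (phi (x - u) * gamma0 n u)) / g0 n x ≤ 16 * (1 + x ^ 2) ^ 2 / n := by
    rw [div_le_iff₀ p0]; simp only [sub_zero]; exact g0_sq_null hn x
  have s1 : (∫ u, (u - 0) ^ 2 * (phi (x - u) * gamma1 u)) / g1 x ≤ (2 + 2 * K1) * (1 + x ^ 2) := by
    refine (slab_moment x 0).trans ?_
    rw [sub_zero]
    have : 0 ≤ K1 * x ^ 2 := by positivity
    nlinarith
  have q : 0 ≤ 16 * (1 + x ^ 2) ^ 2 / n := by positivity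
  have b0 := mul_le_mul_of_nonneg_left s0 (sub_nonneg.2 a1)
  have b1 := mul_le_mul_of_nonneg_left s1 a0
  have b2 : (1 - aSSL n α x) * (16 * (1 + x ^ 2) ^ 2 / n) ≤ 16 * (1 + x ^ 2) ^ 2 / n := by nlinarith
  linarith

end

section
open MeasureTheory Real Set

/-! ### Large observations -/

lemma poly_le_exp' (x : ℝ) : (1 + x ^ 2) ^ 2 ≤ 1024 * exp (x ^ 2 / 16) := by
  have h1 : (1 + x ^ 2) / 32 ≤ exp (x ^ 2 / 32) := by
    have := Real.add_one_le_exp (x ^ 2 / 32); linarith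
  have h2 : exp (x ^ 2 / 16) = exp (x ^ 2 / 32) ^ 2 := by
    rw [← Real.exp_nat_mul]; congr 1; push_cast; ring
  rw [h2]
  have : ((1 + x ^ 2) / 32) ^ 2 ≤ exp (x ^ 2 / 32) ^ 2 := by gcongr
  nlinarith

lemma log_ge_one {n : ℕ} (hn : 3 ≤ n) : 1 ≤ log n := by
  have h3 : (3:ℝ) ≤ n := by exact_mod_cast hn
  rw [Real.le_log_iff_exp_le (by linarith)]
  linarith [Real.exp_one_lt_d9]

lemma large_phi {n : ℕ} (hn : 3 ≤ n) {x : ℝ} (hx : 32 * log n ≤ x ^ 2) :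
    n * (1 + x ^ 2) ^ 2 * phi (x / 2) ≤ 1024 / n := by
  have h3 : (3:ℝ) ≤ n := by exact_mod_cast hn
  have a := phi_le_exp (x / 2)
  have a' := (phi_pos (x / 2)).le
  have b := poly_le_exp' x
  have c : exp (-(x ^ 2 / 16)) ≤ 1 / (n:ℝ) ^ 2 := by
    have : 1 / (n:ℝ) ^ 2 = exp (-(2 * log n)) := by
      rw [Real.exp_neg, mul_comm, Real.exp_mul, Real.exp_log (by linarith)]; norm_cast; simp
    rw [this]; apply Real.exp_le_exp.2; linarith
  calc n * (1 + x ^ 2) ^ 2 * phi (x / 2)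
      ≤ n * (1024 * exp (x ^ 2 / 16)) * exp (-(x / 2) ^ 2 / 2) := by gcongr
    _ = n * 1024 * (exp (x ^ 2 / 16) * exp (-(x / 2) ^ 2 / 2)) := by ring
    _ = n * 1024 * exp (-(x ^ 2 / 16)) := by rw [← Real.exp_add]; congr 2; ring
    _ ≤ n * 1024 * (1 / (n:ℝ) ^ 2) := by gcongr
    _ = _ := by field_simp

lemma large_gamma0 {n : ℕ} (hn : 3 ≤ n) {x : ℝ} (hx : 32 * log n ≤ x ^ 2) :
    n * (1 + x ^ 2) ^ 2 * gamma0 n (x / 2) ≤ 92160 / n := by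
  have h3 : (3:ℝ) ≤ n := by exact_mod_cast hn
  have hl := lam0_ge n
  have hL := log_ge_one hn
  have hl0 : 0 < lam0 n := by linarith
  have hx1 : 1 ≤ x ^ 2 := by linarith
  have hxa : 0 < |x| := by
    rw [abs_pos]; rintro rfl; norm_num at hx1
  have e2 : |x / 2| = |x| / 2 := by rw [abs_div]; norm_num
  set y := lam0 n * |x| / 2 with hy
  have hy0 : 0 < y := by positivity
  have h6 := Real.pow_div_factorial_le_exp y hy0.le 6
  have h6' : exp (-y) ≤ 720 / y ^ 6 := by
    rw [Real.exp_neg, inv_le_comm₀ (exp_pos _) (by positivity), inv_div]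
    have : ((Nat.factorial 6 : ℕ) : ℝ) = 720 := by norm_num [Nat.factorial]
    rw [this] at h6; exact h6
  have hg : gamma0 n (x / 2) = lam0 n / 2 * exp (-y) := by
    unfold gamma0; rw [e2, hy]; congr 2; ring
  have hy6 : y ^ 6 = lam0 n ^ 6 * (x ^ 2) ^ 3 / 64 := by
    rw [hy, ← sq_abs x]; ring
  rw [hg]
  have hq : (1 + x ^ 2) ^ 2 ≤ (2 * x ^ 2) ^ 2 := by gcongr; linarith
  calc n * (1 + x ^ 2) ^ 2 * (lam0 n / 2 * exp (-y))
      ≤ lam0 n * (2 * x ^ 2) ^ 2 * (lam0 n / 2 * (720 / y ^ 6)) := by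
        gcongr; linarith
    _ = 92160 / (lam0 n ^ 4 * x ^ 2) := by
        have : x ≠ 0 := abs_pos.1 hxa
        rw [hy6]; field_simp; norm_num
    _ ≤ 92160 / n := by
        gcongr
        have : (1:ℝ) ≤ lam0 n ^ 3 := one_le_pow₀ (by linarith)
        calc (n:ℝ) ≤ lam0 n := by linarith
          _ = 1 * lam0 n * 1 := by ring
          _ ≤ lam0 n ^ 3 * lam0 n * x ^ 2 := by gcongr
          _ = _ := by ring

/-- For `x² ≥ 32 log n` the slab dominates the spike strongly. -/
def BigN (n : ℕ) : Prop := 3 ≤ n ∧ ∀ x : ℝ, 32 * log n ≤ x ^ 2 → n * ((1 + x ^ 2) * g0 n x) ≤ g1 x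

lemma bigN_exists : ∃ N : ℕ, ∀ n, N ≤ n → BigN n := by
  have hc := cphi_pos
  obtain ⟨N, hN⟩ := exists_nat_ge (100000 / (cphi / 200))
  refine ⟨max N 3, fun n hn => ?_⟩
  have h3 : 3 ≤ n := le_trans (le_max_right _ _) hn
  have hNn : (N:ℝ) ≤ n := by exact_mod_cast le_trans (le_max_left _ _) hn
  have h3' : (3:ℝ) ≤ n := by exact_mod_cast h3
  refine ⟨h3, fun x hx => ?_⟩
  have h1 : 100000 / n ≤ cphi / 200 := by
    rw [div_le_iff₀ (by linarith)]
    have := hN.trans hNn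
    rw [div_le_iff₀ (by positivity)] at this; linarith
  have ha := large_phi h3 hx
  have hb := large_gamma0 h3 hx
  have hu := g0_upper (n := n) (by omega) x
  refine le_trans ?_ (g1_lower x)
  rw [← div_eq_mul_inv, le_div_iff₀ (by positivity)]
  calc n * ((1 + x ^ 2) * g0 n x) * (1 + x ^ 2) = n * (1 + x ^ 2) ^ 2 * g0 n x := by ring
    _ ≤ n * (1 + x ^ 2) ^ 2 * (phi (x / 2) + gamma0 n (x / 2)) := by gcongr
    _ = n * (1 + x ^ 2) ^ 2 * phi (x / 2) + n * (1 + x ^ 2) ^ 2 * gamma0 n (x / 2) := by ring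
    _ ≤ 1024 / n + 92160 / n := add_le_add ha hb
    _ = 93184 / n := by ring
    _ ≤ 100000 / n := by gcongr; norm_num
    _ ≤ _ := h1

/-- Signal risk constant. -/
def Ks : ℝ := 2300 + 2 * K1

lemma Ks_pos : 0 < Ks := by have := K1_pos; unfold Ks; positivity

lemma cRisk_signal {n : ℕ} (hb : BigN n) {α : ℝ} (h0 : 1 / n ≤ α) (h1 : α ≤ 1) (x μ : ℝ) :
    cRisk n α x μ ≤ Ks * (log n + (x - μ) ^ 2) := by
  obtain ⟨h3, hb⟩ := hb
  have h3' : (3:ℝ) ≤ n := by exact_mod_cast h3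
  have hn : 0 < n := by omega
  have hα : 0 < α := lt_of_lt_of_le (by positivity) h0
  have hL := log_ge_one h3
  have hk := K1_pos
  have h := cRisk_le hn hα.le h1 x μ
  have a0 := aSSL_nonneg hn hα.le h1 x
  have a1 := aSSL_le_one hn hα.le h1 x
  have p0 := g0_pos hn x
  have p1 := g1_pos x
  have key : (1 - aSSL n α x) * (68 * x ^ 2 + 32) ≤ 68 * 32 * log n + 32 + 68 := by
    rcases le_total (32 * log n) (x ^ 2) with hx | hx
    · have hm := marg_pos hn hα.le h1 x
      have e : 1 - aSSL n α x = (1 - α) * g0 n x / ((1 - α) * g0 n x + α * g1 x) := by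
        unfold aSSL; field_simp; ring
      have : (1 - aSSL n α x) * (1 + x ^ 2) ≤ 1 := by
        rw [e, div_mul_eq_mul_div, div_le_one hm]
        have i1 := hb x hx
        have i2 : 1 ≤ α * n := by rw [div_le_iff₀ (by linarith)] at h0; exact h0
        have q : 0 ≤ (1 + x ^ 2) * g0 n x := by positivity
        have i3 : (1 + x ^ 2) * g0 n x ≤ α * g1 x := by
          calc (1 + x ^ 2) * g0 n x ≤ (α * n) * ((1 + x ^ 2) * g0 n x) := by nlinarith
            _ = α * (n * ((1 + x ^ 2) * g0 n x)) := by ring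
            _ ≤ _ := by gcongr
        have i4 : (1 - α) * ((1 + x ^ 2) * g0 n x) ≤ (1 + x ^ 2) * g0 n x := by nlinarith
        have : 0 ≤ (1 - α) * g0 n x := mul_nonneg (by linarith) p0.le
        linarith
      nlinarith
    · nlinarith [sq_nonneg x]
  unfold Ks
  have : 0 ≤ K1 * (x - μ) ^ 2 := by positivity
  have : K1 ≤ K1 * log n := by nlinarith
  nlinarith [sq_nonneg (x - μ)]

end

section
open MeasureTheory Real Set ProbabilityTheory

/-! ### Likelihood ratio between `2α` and `α` -/

/-- Marginal density. -/
def marg (n : ℕ) (α x : ℝ) : ℝ := (1 - α) * g0 n x + α * g1 x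

/-- Likelihood ratio of weights `2α` and `α`. -/
def lr (n : ℕ) (α x : ℝ) : ℝ := marg n (2 * α) x / marg n α x

lemma lr_meas (n : ℕ) (α : ℝ) : Measurable (lr n α) := by
  have := g0_meas n
  have := g1_meas
  unfold lr marg; fun_prop

lemma lr_nonneg {n : ℕ} (hn : 0 < n) {α : ℝ} (h0 : 0 < α) (h1 : α ≤ 1 / 2) (x : ℝ) :
    0 ≤ lr n α x :=
  div_nonneg (marg_pos hn (by linarith) (by linarith) x).le
    (marg_pos hn (by linarith) (by linarith) x).le

lemma lr_le_two {n : ℕ} (hn : 0 < n) {α : ℝ} (h0 : 0 < α) (h1 : α ≤ 1 / 2) (x : ℝ) :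
    lr n α x ≤ 2 := by
  have hm : 0 < marg n α x := marg_pos hn (by linarith) (by linarith) x
  have := g0_pos hn x
  unfold lr
  rw [div_le_iff₀ hm]; unfold marg; nlinarith

lemma lr_integrable {n : ℕ} (hn : 0 < n) {α : ℝ} (h0 : 0 < α) (h1 : α ≤ 1 / 2) (μ : ℝ) :
    Integrable (lr n α) (gaussianReal μ 1) := by
  refine (integrable_const (2:ℝ)).mono' (lr_meas n α).aestronglyMeasurable (ae_of_all _ fun x => ?_)
  rw [Real.norm_eq_abs, abs_of_nonneg (lr_nonneg hn h0 h1 x)]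
  exact lr_le_two hn h0 h1 x

lemma lr_integral_le_two {n : ℕ} (hn : 0 < n) {α : ℝ} (h0 : 0 < α) (h1 : α ≤ 1 / 2) (μ : ℝ) :
    ∫ x, lr n α x ∂(gaussianReal μ 1) ≤ 2 := by
  calc ∫ x, lr n α x ∂(gaussianReal μ 1) ≤ ∫ _, (2:ℝ) ∂(gaussianReal μ 1) :=
        integral_mono (lr_integrable hn h0 h1 μ) (integrable_const _) (lr_le_two hn h0 h1)
    _ = 2 := by simp

/-- Threshold. -/
def tn (n : ℕ) : ℝ := √(32 * log n)

lemma tn_sq {n : ℕ} (hn : 3 ≤ n) : tn n ^ 2 = 32 * log n :=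
  Real.sq_sqrt (by linarith [log_ge_one hn])

lemma one_le_tn {n : ℕ} (hn : 3 ≤ n) : 1 ≤ tn n := by
  unfold tn; rw [Real.one_le_sqrt]; linarith [log_ge_one hn]

/-- Exponent constant. -/
def kap : ℝ := cphi / 8000

lemma kap_pos : 0 < kap := by have := cphi_pos; unfold kap; positivity

lemma g1_tail {n : ℕ} (hn : 3 ≤ n) :
    8 * kap / tn n ≤ ∫ x in Icc (tn n) (2 * tn n), g1 x := by
  have ht := one_le_tn hn
  have hc := cphi_pos
  have h : ∫ x in Icc (tn n) (2 * tn n), (cphi / 200 * (1 + 4 * tn n ^ 2)⁻¹)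
      ≤ ∫ x in Icc (tn n) (2 * tn n), g1 x := by
    refine setIntegral_mono_on continuous_const.integrableOn_Icc g1_integrable.integrableOn measurableSet_Icc fun x hx => ?_
    refine le_trans ?_ (g1_lower x)
    have : x ^ 2 ≤ (2 * tn n) ^ 2 := by
      have := hx.2; have := hx.1
      gcongr; linarith
    gcongr; linarith
  rw [setIntegral_const] at h
  refine le_trans ?_ h
  have hv : (volume : Measure ℝ).real (Icc (tn n) (2 * tn n)) = tn n := by
    rw [Real.volume_real_Icc_of_le (by linarith)]; ring
  rw [hv, smul_eq_mul]
  unfold kap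
  have h5 : 1 + 4 * tn n ^ 2 ≤ 5 * tn n ^ 2 := by nlinarith
  calc 8 * (cphi / 8000) / tn n = tn n * (cphi / 200 * (5 * tn n ^ 2)⁻¹) := by field_simp; norm_num
    _ ≤ _ := by gcongr

lemma g0_lr_le {n : ℕ} (hb : BigN n) {α : ℝ} (h0 : 1 / n ≤ α) (h1 : α ≤ 1 / 4) (x : ℝ) :
    g0 n x * lr n α x
      ≤ marg n α x - (Icc (tn n) (2 * tn n)).indicator (fun x => α / 8 * g1 x) x := by
  obtain ⟨h3, hb⟩ := hb
  have h3' : (3:ℝ) ≤ n := by exact_mod_cast h3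
  have hn : 0 < n := by omega
  have hα : 0 < α := lt_of_lt_of_le (by positivity) h0
  have hm : 0 < marg n α x := marg_pos hn (by linarith) (by linarith) x
  have p0 := g0_pos hn x
  have p1 := g1_pos x
  have e : g0 n x * lr n α x = marg n α x - α ^ 2 * (g1 x - g0 n x) ^ 2 / marg n α x := by
    unfold lr; field_simp; unfold marg; ring
  rw [e]
  refine sub_le_sub_left ?_ _
  by_cases hx : x ∈ Icc (tn n) (2 * tn n)
  · rw [indicator_of_mem hx]
    have ht := one_le_tn h3
    have hx2 : 32 * log n ≤ x ^ 2 := by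
      rw [← tn_sq h3]; have := hx.1; gcongr
    have i1 := hb x hx2
    have i2 : 1 ≤ α * n := by rw [div_le_iff₀ (by linarith)] at h0; exact h0
    have i3 : g0 n x ≤ α * g1 x := by
      calc g0 n x ≤ (α * n) * ((1 + x ^ 2) * g0 n x) := by
            have : g0 n x ≤ (1 + x ^ 2) * g0 n x := by nlinarith [sq_nonneg x]
            nlinarith
        _ = α * (n * ((1 + x ^ 2) * g0 n x)) := by ring
        _ ≤ _ := by gcongr
    rw [le_div_iff₀ hm]
    have i4 : marg n α x ≤ 2 * α * g1 x := by unfold marg; nlinarith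
    have i5 : g1 x / 2 ≤ g1 x - g0 n x := by nlinarith
    calc α / 8 * g1 x * marg n α x ≤ α / 8 * g1 x * (2 * α * g1 x) := by gcongr
      _ = α ^ 2 * (g1 x / 2) ^ 2 := by ring
      _ ≤ _ := by gcongr
  · rw [indicator_of_notMem hx]; positivity

lemma gauss_phi (f : ℝ → ℝ) : ∫ x, f x ∂(gaussianReal 0 1) = ∫ x, phi x * f x := by
  rw [integral_gaussianReal_eq_integral_smul one_ne_zero]
  simp only [← phi_eq_pdf, smul_eq_mul]

lemma lr_null {n : ℕ} (hb : BigN n) {α : ℝ} (h0 : 1 / n ≤ α) (h1 : α ≤ 1 / 4) :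
    ∫ x, lr n α x ∂(gaussianReal 0 1) ≤ exp (1 / n - α * kap / tn n) := by
  have h3 := hb.1
  have h3' : (3:ℝ) ≤ n := by exact_mod_cast h3
  have hn : 0 < n := by omega
  have hα : 0 < α := lt_of_lt_of_le (by positivity) h0
  have ig0 := g0_integrable hn
  have hbd : ∀ x, ‖lr n α x‖ ≤ 2 := fun x => by
    rw [Real.norm_eq_abs, abs_of_nonneg (lr_nonneg hn hα (by linarith) x)]
    exact lr_le_two hn hα (by linarith) x
  have im : Integrable (marg n α) := (ig0.const_mul _).add (g1_integrable.const_mul _)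
  have ii : Integrable ((Icc (tn n) (2 * tn n)).indicator (fun x => α / 8 * g1 x)) :=
    (g1_integrable.const_mul _).indicator measurableSet_Icc
  have i1 : Integrable fun x => g0 n x * lr n α x :=
    ig0.mul_bdd (c := 2) (lr_meas n α).aestronglyMeasurable (ae_of_all _ hbd)
  have i2 : Integrable fun x => phi x * lr n α x :=
    phi_integrable.mul_bdd (c := 2) (lr_meas n α).aestronglyMeasurable (ae_of_all _ hbd)
  have s1 : ∫ x, phi x * lr n α x ≤ (1 + 1 / n) * ∫ x, g0 n x * lr n α x := by
    rw [← integral_const_mul]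
    refine integral_mono i2 (i1.const_mul _) fun x => ?_
    have := mul_le_mul_of_nonneg_right (g0_lower hn x) (lr_nonneg hn hα (by linarith) x)
    simp only; linarith
  have s2 : ∫ x, g0 n x * lr n α x ≤ 1 - α * kap / tn n := by
    have : ∫ x, g0 n x * lr n α x
        ≤ ∫ x, (marg n α x - (Icc (tn n) (2 * tn n)).indicator (fun x => α / 8 * g1 x) x) :=
      integral_mono i1 (im.sub ii) (g0_lr_le hb h0 h1)
    refine this.trans ?_
    rw [integral_sub im ii, integral_indicator measurableSet_Icc, integral_const_mul]
    have em : ∫ x, marg n α x = 1 := by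
      unfold marg
      rw [integral_add (ig0.const_mul _) (g1_integrable.const_mul _), integral_const_mul,
        integral_const_mul, g0_integral hn, g1_integral]; ring
    rw [em]
    have := g1_tail h3
    have q : α / 8 * (8 * kap / tn n) ≤ α / 8 * ∫ x in Icc (tn n) (2 * tn n), g1 x := by gcongr
    have : α / 8 * (8 * kap / tn n) = α * kap / tn n := by ring
    linarith
  rw [gauss_phi]
  refine s1.trans ?_
  rw [sub_eq_add_neg, Real.exp_add]
  have e1 := Real.add_one_le_exp (1 / (n:ℝ))
  have e2 := Real.add_one_le_exp (-(α * kap / tn n))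
  have e3 : 0 ≤ ∫ x, g0 n x * lr n α x :=
    integral_nonneg fun x => mul_nonneg (g0_pos hn x).le (lr_nonneg hn hα (by linarith) x)
  refine mul_le_mul (by linarith) (by linarith) e3 (exp_pos _).le

/-- The MMLE exceeding `2α` forces the likelihood ratio above one. -/
lemma one_le_prod_lr {n : ℕ} (hn : 0 < n) {hahat : (Fin n → ℝ) → ℝ} (h : IsMMLESSL 1 hahat)
    {α : ℝ} (hα : 1 * log n / n ≤ α) (h0 : 0 < α) (h1 : α ≤ 1 / 2) (X : Fin n → ℝ)
    (hX : 2 * α < hahat X) : 1 ≤ ∏ i, lr n α (X i) := by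
  obtain ⟨hmem, hmax⟩ := h.2 X
  have hh1 := hmem.2
  have hm : ∀ β, 0 ≤ β → β ≤ 1 → ∀ i, 0 < marg n β (X i) := fun β a b i => marg_pos hn a b _
  have hle := hmax α ⟨hα, by linarith⟩
  set b := hahat X
  set τ := α / (b - α) with hτ
  have hba : 0 < b - α := by linarith
  have hτ0 : 0 ≤ τ := by positivity
  have hτ1 : τ ≤ 1 := by rw [hτ, div_le_one hba]; linarith
  have hcomb : 2 * α = (1 - τ) * α + τ * b := by rw [hτ]; field_simp; ring
  have key : logMargSSL α X ≤ logMargSSL (2 * α) X := by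
    have : (1 - τ) * logMargSSL α X + τ * logMargSSL b X ≤ logMargSSL (2 * α) X := by
      unfold logMargSSL
      rw [Finset.mul_sum, Finset.mul_sum, ← Finset.sum_add_distrib]
      refine Finset.sum_le_sum fun i _ => ?_
      have := strictConcaveOn_log_Ioi.concaveOn.2
        (hm α h0.le (by linarith) i) (hm b (by linarith) hh1 i)
        (sub_nonneg.2 hτ1) hτ0 (by ring)
      simp only [smul_eq_mul] at this
      unfold marg at this
      refine this.trans (le_of_eq ?_)
      congr 1
      rw [hcomb]; ring
    nlinarith
  have hpos : ∀ i, 0 < lr n α (X i) := fun i =>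
    div_pos (hm (2 * α) (by linarith) (by linarith) i) (hm α h0.le (by linarith) i)
  rw [← Real.log_nonneg_iff (Finset.prod_pos fun i _ => hpos i), Real.log_prod fun i _ => (hpos i).ne']
  have e : ∑ i, log (lr n α (X i)) = logMargSSL (2 * α) X - logMargSSL α X := by
    unfold logMargSSL
    rw [← Finset.sum_sub_distrib]
    refine Finset.sum_congr rfl fun i _ => ?_
    unfold lr
    rw [Real.log_div (hm (2 * α) (by linarith) (by linarith) i).ne'
      (hm α h0.le (by linarith) i).ne']
    rfl
  rw [e]; linarith

end

section
open MeasureTheory Real Set ProbabilityTheory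

/-! ### Null coordinates and assembly -/

/-- Null risk constant. -/
def Kn : ℝ := 4096 + (2 + 2 * K1) * (80 * Mphi + 256) + 256 * Kc

lemma Kn_pos : 0 < Kn := by
  have := K1_pos; have := Kc_pos; have := one_le_Mphi; unfold Kn; positivity

/-- Envelope `1/φ` restricted to `|x| ≤ t`. -/
def invPhi (n : ℕ) (x : ℝ) : ℝ := (Icc (-tn n) (tn n)).indicator (fun x => (phi x)⁻¹) x

lemma invPhi_nonneg (n : ℕ) (x : ℝ) : 0 ≤ invPhi n x :=
  indicator_nonneg (fun x _ => (inv_pos.2 (phi_pos x)).le) x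

lemma null_good {n : ℕ} (hb : BigN n) {α α1 : ℝ} (h0 : 0 < α) (h1 : α ≤ α1) (h2 : α1 ≤ 1 / 2)
    (x : ℝ) :
    aSSL n α x * (1 + x ^ 2) ≤ 80 * Mphi * (α1 * invPhi n x) + 256 * (exp (x ^ 2 / 4) / n) := by
  have h3 := hb.1
  have h3' : (3:ℝ) ≤ n := by exact_mod_cast h3
  have hn : 0 < n := by omega
  have hM := one_le_Mphi
  have p0 := g0_pos hn x
  have p1 := g1_pos x
  have pp := phi_pos x
  have ht := one_le_tn h3
  have hα1 : 0 ≤ α1 := by linarith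
  by_cases hx : x ∈ Icc (-tn n) (tn n)
  · have : invPhi n x = (phi x)⁻¹ := indicator_of_mem hx _
    rw [this]
    have a : aSSL n α x ≤ 4 * α1 * g1 x / phi x := by
      unfold aSSL
      have hm := marg_pos hn h0.le (by linarith) x
      rw [div_le_div_iff₀ hm pp]
      have l := g0_lower_two hn x
      have l2 : phi x ≤ 4 * ((1 - α) * g0 n x + α * g1 x) := by
        have : 0 < α * g1 x := by positivity
        nlinarith
      calc α * g1 x * phi x ≤ α1 * g1 x * (4 * ((1 - α) * g0 n x + α * g1 x)) := by gcongr
        _ = _ := by ring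
    have hu := g1_upper x
    have b : aSSL n α x * (1 + x ^ 2) ≤ 80 * Mphi * (α1 * (phi x)⁻¹) := by
      calc aSSL n α x * (1 + x ^ 2)
          ≤ (4 * α1 * (20 * Mphi * (1 + x ^ 2)⁻¹) / phi x) * (1 + x ^ 2) := by
            gcongr
            refine a.trans ?_
            have : 0 ≤ α1 := by linarith
            gcongr
        _ = _ := by field_simp; ring
    have : 0 ≤ 256 * (exp (x ^ 2 / 4) / n) := by positivity
    linarith
  · have : invPhi n x = 0 := indicator_of_notMem hx _
    rw [this]
    have hx2 : tn n ^ 2 ≤ x ^ 2 := by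
      rw [← sq_abs x]
      have : tn n ≤ |x| := by
        by_contra hc; push Not at hc; exact hx (abs_le.1 hc.le)
      gcongr
    rw [tn_sq h3] at hx2
    have a1 := aSSL_le_one hn h0.le (by linarith) x
    have c1 := poly_le_exp x
    have c2 : exp (x ^ 2 / 8) ≤ exp (x ^ 2 / 4) / n := by
      rw [le_div_iff₀ (by linarith)]
      calc exp (x ^ 2 / 8) * n = exp (x ^ 2 / 8 + log n) := by
            rw [Real.exp_add, Real.exp_log (by linarith)]
        _ ≤ _ := by
            apply Real.exp_le_exp.2
            have := log_ge_one h3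
            linarith
    have c3 : 1 + x ^ 2 ≤ (1 + x ^ 2) ^ 2 := by nlinarith [sq_nonneg x, sq_nonneg (x ^ 2)]
    have c4 : aSSL n α x * (1 + x ^ 2) ≤ 1 + x ^ 2 := by nlinarith [sq_nonneg x]
    nlinarith

lemma null_point {n : ℕ} (hb : BigN n) {hahat : (Fin n → ℝ) → ℝ} (h : IsMMLESSL 1 hahat)
    {α : ℝ} (hα : 1 * log n / n ≤ α) (h1 : α ≤ 1 / 4) (X : Fin n → ℝ) (i : Fin n) :
    cRisk n (hahat X) (X i) 0 ≤ Kn * (exp (X i ^ 2 / 4) / n + 2 * α * invPhi n (X i)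
      + n * ∏ j, lr n α (X j)) := by
  have h3 := hb.1
  have h3' : (3:ℝ) ≤ n := by exact_mod_cast h3
  have hn : 0 < n := by omega
  have hL := log_ge_one h3
  have hl0 : 0 < 1 * log n / n := by positivity
  have h0 : 0 < α := lt_of_lt_of_le hl0 hα
  obtain ⟨hmem, -⟩ := h.2 X
  have hb0 : 0 < hahat X := lt_of_lt_of_le hl0 hmem.1
  have hb1 := hmem.2
  have hK := K1_pos
  have hKc := Kc_pos
  have hM := one_le_Mphi
  set x := X i
  set P := ∏ j, lr n α (X j) with hP
  have hP0 : 0 ≤ P := Finset.prod_nonneg fun j _ => lr_nonneg hn h0 (by linarith) _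
  have hI := invPhi_nonneg n x
  set W := exp (x ^ 2 / 4) with hW
  have hWp : 0 < W := exp_pos _
  have c1 : (1 + x ^ 2) ^ 2 ≤ 256 * W := by
    refine (poly_le_exp x).trans ?_
    gcongr
    rw [hW]; apply Real.exp_le_exp.2; nlinarith [sq_nonneg x]
  have c2 : (1 + x ^ 2) ^ 2 / n ≤ 256 * (W / n) := by
    rw [mul_div_assoc']; gcongr
  have t1 : 0 ≤ W / n := by positivity
  have t2 : 0 ≤ 2 * α * invPhi n x := by positivity
  have t3 : 0 ≤ n * P := by positivity
  have k1 : 0 ≤ K1 * (W / n) := by positivity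
  rcases le_or_gt (hahat X) (2 * α) with hc | hc
  · have r := cRisk_null hn hb0.le hb1 x
    have g := null_good hb hb0 hc (by linarith) x
    have g2 := mul_le_mul_of_nonneg_left g (show 0 ≤ 2 + 2 * K1 by positivity)
    have : cRisk n (hahat X) x 0 ≤ 4096 * (W / n)
        + (2 + 2 * K1) * (80 * Mphi * (2 * α * invPhi n x) + 256 * (W / n)) := by
      have : 16 * (1 + x ^ 2) ^ 2 / n = 16 * ((1 + x ^ 2) ^ 2 / n) := by ring
      linarith
    refine this.trans ?_
    set A := 2 * α * invPhi n x
    set B := W / n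
    set D := n * P
    have e : Kn * (B + A + D) - (4096 * B + (2 + 2 * K1) * (80 * Mphi * A + 256 * B))
      = 4096 * (A + D) + (2 + 2 * K1) * (80 * Mphi * B + 80 * Mphi * D + 256 * A + 256 * D)
        + 256 * Kc * (B + A + D) := by unfold Kn; ring
    have : 0 ≤ 4096 * (A + D) + (2 + 2 * K1) * (80 * Mphi * B + 80 * Mphi * D + 256 * A + 256 * D)
        + 256 * Kc * (B + A + D) := by positivity
    linarith
  · have hP1 : 1 ≤ P := one_le_prod_lr hn h hα h0 (by linarith) X hc
    have r := cRisk_crude hn hb0.le hb1 x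
    have q : 1 + x ^ 2 ≤ 256 * (W / n) + 256 * (n * P) := by
      have : 1 + x ^ 2 ≤ (1 + x ^ 2) ^ 2 / n + n := by
        rw [div_add' _ _ _ (by positivity), le_div_iff₀ (by positivity)]
        nlinarith [sq_nonneg (1 + x ^ 2 - n)]
      nlinarith
    have q2 := mul_le_mul_of_nonneg_left q hKc.le
    refine r.trans (q2.trans ?_)
    set A := 2 * α * invPhi n x
    set B := W / n
    set D := n * P
    have e : Kn * (B + A + D) - Kc * (256 * B + 256 * D)
      = (4096 + (2 + 2 * K1) * (80 * Mphi + 256)) * (B + A + D) + 256 * Kc * A := by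
        unfold Kn; ring
    have : 0 ≤ (4096 + (2 + 2 * K1) * (80 * Mphi + 256)) * (B + A + D) + 256 * Kc * A := by
      positivity
    linarith

/-! Gaussian expectations. -/

/-- `E exp(X²/4)`. -/
def CW : ℝ := ∫ x, exp (x ^ 2 / 4) ∂(gaussianReal 0 1)

lemma gauss_integrable {f : ℝ → ℝ} (hf : Integrable fun x => phi x * f x) :
    Integrable f (gaussianReal 0 1) := by
  rw [gaussianReal_of_var_ne_zero 0 one_ne_zero]
  rw [integrable_withDensity_iff (measurable_gaussianPDF 0 1)
    (ae_of_all _ fun _ => gaussianPDF_lt_top)]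
  refine hf.congr (ae_of_all _ fun x => ?_)
  simp only [toReal_gaussianPDF, ← phi_eq_pdf]; ring

lemma W_integrable : Integrable (fun x => exp (x ^ 2 / 4)) (gaussianReal 0 1) := by
  apply gauss_integrable
  refine ((integrable_exp_neg_mul_sq (b := 1 / 4) (by norm_num)).const_mul (1 / √(2 * π))).congr
    (ae_of_all _ fun x => ?_)
  simp only [phi]
  rw [div_mul_eq_mul_div, div_mul_eq_mul_div, ← Real.exp_add, one_mul]
  congr 2; ring

lemma CW_nonneg : 0 ≤ CW := integral_nonneg fun x => (exp_pos _).le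

lemma invPhi_mul (n : ℕ) :
    (fun x => phi x * invPhi n x) = (Icc (-tn n) (tn n)).indicator (fun _ => (1:ℝ)) := by
  ext x
  unfold invPhi
  have := phi_pos x
  by_cases hx : x ∈ Icc (-tn n) (tn n)
  · rw [indicator_of_mem hx, indicator_of_mem hx]; field_simp
  · rw [indicator_of_notMem hx, indicator_of_notMem hx]; simp

lemma invPhi_integrable (n : ℕ) : Integrable (invPhi n) (gaussianReal 0 1) := by
  apply gauss_integrable
  rw [invPhi_mul, integrable_indicator_iff measurableSet_Icc]
  exact continuous_const.integrableOn_Icc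

lemma invPhi_integral {n : ℕ} (hn : 3 ≤ n) :
    ∫ x, invPhi n x ∂(gaussianReal 0 1) = 2 * tn n := by
  have := one_le_tn hn
  rw [gauss_phi, invPhi_mul, integral_indicator measurableSet_Icc, setIntegral_const,
    Real.volume_real_Icc_of_le (by linarith)]
  simp; ring

lemma sq_gauss_integrable (μ : ℝ) : Integrable (fun x => (x - μ) ^ 2) (gaussianReal μ 1) := by
  have h : MemLp id 2 (gaussianReal μ 1) := memLp_id_gaussianReal 2
  exact (h.sub (memLp_const μ)).integrable_sq

lemma sq_gauss_integral (μ : ℝ) : ∫ x, (x - μ) ^ 2 ∂(gaussianReal μ 1) = 1 := by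
  have h := variance_id_gaussianReal (μ := μ) (v := 1)
  rw [variance_eq_integral measurable_id.aemeasurable] at h
  simp only [id_eq, integral_id_gaussianReal] at h
  simpa using h

lemma assemble {n : ℕ} (hb : BigN n) {s : ℕ} {hahat : (Fin n → ℝ) → ℝ} (h : IsMMLESSL 1 hahat)
    {θ0 : Fin n → ℝ} (hθ : θ0 ∈ ell0 n s) (f : Fin n → (Fin n → ℝ) → ℝ) {B : ℝ} (hB : 0 ≤ B)
    (hf : ∀ i, θ0 i = 0 → Integrable (f i) (Pdata n θ0) ∧ (∫ X, f i X ∂(Pdata n θ0) ≤ B) ∧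
      ∀ X, cRisk n (hahat X) (X i) 0 ≤ f i X) :
    postRiskSSL hahat θ0 ≤ 2 * Ks * (s * log n) + n * B := by
  classical
  have h3 := hb.1
  have h3' : (3:ℝ) ≤ n := by exact_mod_cast h3
  have hn : 0 < n := by omega
  have hL := log_ge_one h3
  have hK := Ks_pos
  have hlo : ∀ X, 1 / n ≤ hahat X := fun X => by
    refine le_trans ?_ (h.2 X).1.1
    gcongr; linarith
  have hpos : ∀ X, 0 ≤ hahat X := fun X => le_trans (by positivity) (hlo X)
  have hle : ∀ X, hahat X ≤ 1 := fun X => (h.2 X).1.2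
  let F : Fin n → (Fin n → ℝ) → ℝ := fun i X =>
    if θ0 i = 0 then f i X else Ks * (log n + (X i - θ0 i) ^ 2)
  have hsq : ∀ i, Integrable (fun X : Fin n → ℝ => (X i - θ0 i) ^ 2) (Pdata n θ0) := fun i =>
    integrable_comp_eval (X := fun _ : Fin n => ℝ) (μ := fun i => gaussianReal (θ0 i) 1) (i := i)
      (f := fun u : ℝ => (u - θ0 i) ^ 2) (sq_gauss_integrable _)
  haveI : IsProbabilityMeasure (Pdata n θ0) := by unfold Pdata; infer_instance
  have hFi : ∀ i, Integrable (F i) (Pdata n θ0) := by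
    intro i
    by_cases hi : θ0 i = 0
    · simp only [F, hi, if_true]; exact (hf i hi).1
    · simp only [F, hi, if_false]
      exact ((integrable_const _).add (hsq i)).const_mul _
  have hFint : ∀ i, ∫ X, F i X ∂(Pdata n θ0) ≤ B + if θ0 i ≠ 0 then 2 * Ks * log n else 0 := by
    intro i
    by_cases hi : θ0 i = 0
    · simp only [F, hi, if_true, ne_eq, not_true, if_false, add_zero]; exact (hf i hi).2.1
    · simp only [F, hi, if_false, ne_eq, not_false_iff, if_true]
      rw [integral_const_mul, integral_add (integrable_const _) (hsq i)]
      have : ∫ X : Fin n → ℝ, (X i - θ0 i) ^ 2 ∂(Pdata n θ0) = 1 := by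
        rw [← sq_gauss_integral (θ0 i)]
        exact integral_comp_eval (X := fun _ : Fin n => ℝ) (μ := fun i => gaussianReal (θ0 i) 1)
          (i := i) (f := fun u : ℝ => (u - θ0 i) ^ 2) (sq_gauss_integrable _).aestronglyMeasurable
      rw [this]
      simp
      nlinarith
  unfold postRiskSSL
  have step : ∫ X, (∫ θ, (∑ i, (θ i - θ0 i) ^ 2) ∂(postSSL n (hahat X) X)) ∂(Pdata n θ0)
      ≤ ∫ X, ∑ i, F i X ∂(Pdata n θ0) := by
    refine integral_mono_of_nonneg (ae_of_all _ fun X => ?_)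
      (integrable_finsetSum _ fun i _ => hFi i) (ae_of_all _ fun X => ?_)
    · exact integral_nonneg fun θ => Finset.sum_nonneg fun i _ => sq_nonneg _
    · simp only
      rw [post_moment hn (hpos X) (hle X)]
      refine Finset.sum_le_sum fun i _ => ?_
      by_cases hi : θ0 i = 0
      · simp only [F, hi, if_true]; exact (hf i hi).2.2 X
      · simp only [F, hi, if_false]; exact cRisk_signal hb (hlo X) (hle X) _ _
  refine step.trans ?_
  rw [integral_finsetSum _ fun i _ => hFi i]
  refine (Finset.sum_le_sum fun i _ => hFint i).trans ?_
  rw [Finset.sum_add_distrib, ← Finset.sum_filter, Finset.sum_const, Finset.sum_const]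
  have hcard : ((Finset.univ.filter fun i => θ0 i ≠ 0).card : ℝ) ≤ s := by
    have : Nat.card {i : Fin n // θ0 i ≠ 0} ≤ s := hθ
    rw [Nat.card_eq_fintype_card, Fintype.card_subtype] at this
    exact_mod_cast this
  simp only [Finset.card_univ, Fintype.card_fin, nsmul_eq_mul]
  have : ((Finset.univ.filter fun i => θ0 i ≠ 0).card : ℝ) * (2 * Ks * log n)
      ≤ s * (2 * Ks * log n) := by gcongr
  linarith

lemma prod_lr_bound {n : ℕ} (hb : BigN n) {s : ℕ} {θ0 : Fin n → ℝ} (hθ : θ0 ∈ ell0 n s)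
    (hs : (s:ℝ) ≤ n / 2) {α : ℝ} (h0 : 1 / n ≤ α) (h1 : α ≤ 1 / 4) :
    Integrable (fun X : Fin n → ℝ => ∏ i, lr n α (X i)) (Pdata n θ0) ∧
    ∫ X, ∏ i, lr n α (X i) ∂(Pdata n θ0) ≤ exp (1 + s - n * (α * kap / tn n) / 2) := by
  classical
  have h3 := hb.1
  have h3' : (3:ℝ) ≤ n := by exact_mod_cast h3
  have hn : 0 < n := by omega
  have hα : 0 < α := lt_of_lt_of_le (by positivity) h0
  have ht := one_le_tn h3
  have hk := kap_pos
  have hlrint := fun i => lr_integrable hn hα (by linarith) (θ0 i)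
  constructor
  · exact Integrable.fintype_prod_dep (f := fun _ => lr n α) (μ := fun i => gaussianReal (θ0 i) 1) hlrint
  unfold Pdata
  rw [integral_fintype_prod_eq_prod (E := fun _ : Fin n => ℝ) (fun _ => lr n α)]
  set c := α * kap / tn n with hc
  have hc0 : 0 ≤ c := by positivity
  have hfac : ∀ i, ∫ x, lr n α x ∂(gaussianReal (θ0 i) 1)
      ≤ exp ((1 / n - c) + if θ0 i ≠ 0 then (1 + c) else 0) := by
    intro i
    by_cases hi : θ0 i = 0
    · simp only [hi, ne_eq, not_true, if_false, add_zero]; exact lr_null hb h0 h1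
    · simp only [hi, ne_eq, not_false_iff, if_true]
      refine (lr_integral_le_two hn hα (by linarith) _).trans ?_
      have e1 := Real.add_one_le_exp (1:ℝ)
      have e2 : exp 1 ≤ exp (1 / n - c + (1 + c)) := by
        apply Real.exp_le_exp.2
        have : 0 ≤ 1 / (n:ℝ) := by positivity
        linarith
      linarith
  refine (Finset.prod_le_prod (fun i _ => ?_) fun i _ => hfac i).trans ?_
  · exact integral_nonneg fun x => lr_nonneg hn hα (by linarith) x
  rw [← Real.exp_sum]
  apply Real.exp_le_exp.2
  rw [Finset.sum_add_distrib, ← Finset.sum_filter, Finset.sum_const, Finset.sum_const]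
  have hcard : ((Finset.univ.filter fun i => θ0 i ≠ 0).card : ℝ) ≤ s := by
    have : Nat.card {i : Fin n // θ0 i ≠ 0} ≤ s := hθ
    rw [Nat.card_eq_fintype_card, Fintype.card_subtype] at this
    exact_mod_cast this
  simp only [Finset.card_univ, Fintype.card_fin, nsmul_eq_mul]
  have a1 : ((Finset.univ.filter fun i => θ0 i ≠ 0).card : ℝ) * (1 + c) ≤ s * (1 + c) := by gcongr
  have a2 : (n:ℝ) * (1 / n - c) = 1 - n * c := by field_simp
  rw [a2]
  nlinarith

end

section
open MeasureTheory Real Set ProbabilityTheory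

/-! ### Conclusion -/

lemma coord_integral {n : ℕ} {θ0 : Fin n → ℝ} {i : Fin n} (hi : θ0 i = 0) {g : ℝ → ℝ}
    (hg : Integrable g (gaussianReal 0 1)) :
    Integrable (fun X : Fin n → ℝ => g (X i)) (Pdata n θ0) ∧
    ∫ X, g (X i) ∂(Pdata n θ0) = ∫ x, g x ∂(gaussianReal 0 1) := by
  rw [← hi] at hg ⊢
  exact ⟨integrable_comp_eval (X := fun _ : Fin n => ℝ) (μ := fun i => gaussianReal (θ0 i) 1)
      (i := i) (f := g) hg,
    integral_comp_eval (X := fun _ : Fin n => ℝ) (μ := fun i => gaussianReal (θ0 i) 1)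
      (i := i) (f := g) hg.aestronglyMeasurable⟩

lemma risk_dense {n : ℕ} (hb : BigN n) {s : ℕ} {hahat : (Fin n → ℝ) → ℝ} (h : IsMMLESSL 1 hahat)
    {θ0 : Fin n → ℝ} (hθ : θ0 ∈ ell0 n s) :
    postRiskSSL hahat θ0 ≤ 2 * Ks * (s * log n) + n * (2 * Kc) := by
  have h3 := hb.1
  have hn : 0 < n := by omega
  have hL := log_ge_one h3
  have hK := Kc_pos
  refine assemble hb h hθ (fun i X => Kc * (1 + (X i) ^ 2)) (by positivity) fun i hi => ?_
  have hsq : Integrable (fun x : ℝ => x ^ 2) (gaussianReal 0 1) := by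
    simpa using sq_gauss_integrable 0
  have hsqi : ∫ x : ℝ, x ^ 2 ∂(gaussianReal 0 1) = 1 := by
    simpa using sq_gauss_integral 0
  obtain ⟨a, b⟩ := coord_integral hi (((integrable_const (1:ℝ)).add hsq).const_mul Kc)
  refine ⟨a, ?_, fun X => ?_⟩
  · refine b.le.trans (le_of_eq ?_)
    rw [integral_const_mul]
    simp only [Pi.add_apply]
    rw [integral_add (integrable_const _) hsq, hsqi]
    simp; ring
  · refine cRisk_crude hn ?_ (h.2 X).1.2 _
    refine le_trans ?_ (h.2 X).1.1
    positivity

lemma risk_sparse {n : ℕ} (hb : BigN n) {s : ℕ} {hahat : (Fin n → ℝ) → ℝ} (h : IsMMLESSL 1 hahat)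
    {θ0 : Fin n → ℝ} (hθ : θ0 ∈ ell0 n s) (hs : (s:ℝ) ≤ n / 2) {α : ℝ} (h0 : 1 * log n / n ≤ α)
    (h1 : α ≤ 1 / 4) (h2 : 2 * (s + log n) ≤ n * (α * kap / tn n) / 2) :
    postRiskSSL hahat θ0 ≤ 2 * Ks * (s * log n) + Kn * (CW + 4 * (n * α * tn n) + 3) := by
  have h3 := hb.1
  have h3' : (3:ℝ) ≤ n := by exact_mod_cast h3
  have hn : 0 < n := by omega
  have hnp : (0:ℝ) < n := by linarith
  have hL := log_ge_one h3
  have hK := Kn_pos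
  have hC := CW_nonneg
  have ht := one_le_tn h3
  have hα : 1 / n ≤ α := by
    refine le_trans ?_ h0
    gcongr; linarith
  have hα0 : 0 ≤ α := le_trans (by positivity) hα
  obtain ⟨pi, pb⟩ := prod_lr_bound hb hθ hs hα h1
  have pb2 : ∫ X, ∏ i, lr n α (X i) ∂(Pdata n θ0) ≤ 3 / n ^ 2 := by
    refine pb.trans ?_
    have e : exp (1 + s - n * (α * kap / tn n) / 2) ≤ exp (1 + -(2 * log n)) := by
      apply Real.exp_le_exp.2
      have : (0:ℝ) ≤ s := Nat.cast_nonneg _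
      linarith
    refine e.trans ?_
    rw [Real.exp_add, Real.exp_neg, two_mul, Real.exp_add, Real.exp_log hnp, ← sq,
      ← div_eq_mul_inv]
    have := Real.exp_one_lt_d9
    gcongr
    linarith
  have key := assemble hb h hθ (B := Kn * (CW / n + 2 * α * (2 * tn n) + n * (3 / n ^ 2)))
    (fun i X => Kn * (exp (X i ^ 2 / 4) / n + 2 * α * invPhi n (X i) + n * ∏ j, lr n α (X j)))
    (by positivity) fun i hi => by
      obtain ⟨a, b⟩ := coord_integral hi W_integrable
      obtain ⟨a', b'⟩ := coord_integral hi (invPhi_integrable n)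
      have i1 := a.div_const (n:ℝ)
      have i2 := a'.const_mul (2 * α)
      have i3 := pi.const_mul (n:ℝ)
      refine ⟨((i1.add i2).add i3).const_mul _, ?_, fun X => null_point hb h h0 h1 X i⟩
      have i12 : Integrable (fun X : Fin n → ℝ => exp (X i ^ 2 / 4) / n + 2 * α * invPhi n (X i))
        (Pdata n θ0) := i1.add i2
      rw [integral_const_mul, integral_add i12 i3, integral_add i1 i2, integral_div, integral_const_mul, integral_const_mul, b, b',
        invPhi_integral h3]
      have : ∫ x : ℝ, exp (x ^ 2 / 4) ∂(gaussianReal 0 1) = CW := rfl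
      rw [this]
      gcongr
  refine key.trans (le_of_eq ?_)
  field_simp
  ring

lemma large_exists (M : ℝ) : ∃ N : ℕ, ∀ n, N ≤ n → M ≤ log (n:ℝ) := by
  have := (Real.tendsto_log_atTop.comp tendsto_natCast_atTop_atTop).eventually_ge_atTop M
  exact Filter.eventually_atTop.1 this

lemma log_sq_le {n : ℕ} (h3 : 3 ≤ n) : log n ^ 2 ≤ 4 * n := by
  have h3' : (3:ℝ) ≤ n := by exact_mod_cast h3
  have hL := log_ge_one h3
  have h : log (√n) = log n / 2 := Real.log_sqrt (by linarith)
  have h2 := Real.log_le_self (Real.sqrt_nonneg (n:ℝ))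
  have h4 := Real.sq_sqrt (show (0:ℝ) ≤ n by linarith)
  nlinarith

/-- Multiplier in the choice of the comparison weight. -/
def Kap : ℝ := 1 + 4 / kap

lemma one_le_Kap : 1 ≤ Kap := by
  have := kap_pos
  unfold Kap
  have : 0 < 4 / kap := by positivity
  linarith

lemma risk_main {n : ℕ} (hb : BigN n) (hbig : 12800 * Kap ^ 2 ≤ log (n:ℝ))
    {s : ℕ} {hahat : (Fin n → ℝ) → ℝ} (h : IsMMLESSL 1 hahat)
    {θ0 : Fin n → ℝ} (hθ : θ0 ∈ ell0 n s) :
    postRiskSSL hahat θ0 ≤ (2 * Ks + 2 * Kc) * (s * log n)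
      + Kn * (CW + 128 * Kap * (log n * (s + log n)) + 3) := by
  have h3 := hb.1
  have h3' : (3:ℝ) ≤ n := by exact_mod_cast h3
  have hnp : (0:ℝ) < n := by linarith
  have hL := log_ge_one h3
  have hK := Kn_pos
  have hKc := Kc_pos
  have hKs := Ks_pos
  have hC := CW_nonneg
  have ht := one_le_tn h3
  have ht2 := tn_sq h3
  have hk := kap_pos
  have hKap := one_le_Kap
  have hs0 : (0:ℝ) ≤ s := Nat.cast_nonneg _
  have hLpos : 0 < log (n:ℝ) := by linarith
  rcases le_or_gt (n:ℝ) (s * log n) with hc | hc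
  · have := risk_dense hb h hθ
    have p : 0 ≤ Kn * (CW + 128 * Kap * (log n * (s + log n)) + 3) := by positivity
    nlinarith
  · have hL2 := log_sq_le h3
    have h4 : (s + log n) * log n ≤ 5 * n := by nlinarith
    have hq : (Kap * tn n * (s + log n) / n) ^ 2 ≤ (1 / 4) ^ 2 := by
      have e : (Kap * tn n * (s + log n) / n) ^ 2 * log n
          = 32 * Kap ^ 2 * ((s + log n) * log n / n) ^ 2 := by
        rw [div_pow, div_pow, mul_pow, mul_pow, ht2]; ring
      have e2 : (s + log n) * log n / n ≤ 5 := by rwa [div_le_iff₀ hnp]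
      have e3 : ((s + log n) * log n / n) ^ 2 ≤ 5 ^ 2 := by
        have : 0 ≤ (s + log n) * log n / n := by positivity
        gcongr
      have e4 : (Kap * tn n * (s + log n) / n) ^ 2 * log n ≤ (1 / 4) ^ 2 * log n := by
        rw [e]
        have : 32 * Kap ^ 2 * ((s + log n) * log n / n) ^ 2 ≤ 32 * Kap ^ 2 * 5 ^ 2 := by gcongr
        linarith
      exact le_of_mul_le_mul_right e4 hLpos
    have h1 : Kap * tn n * (s + log n) / n ≤ 1 / 4 :=
      le_of_sq_le_sq hq (by norm_num)
    have hs : (s:ℝ) ≤ n / 2 := by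
      have : 2 ≤ log (n:ℝ) := by nlinarith
      nlinarith
    have hKt : 1 ≤ Kap * tn n := one_le_mul_of_one_le_of_one_le hKap ht
    have h0 : 1 * log n / n ≤ Kap * tn n * (s + log n) / n := by
      gcongr; linarith
    have h2 : 2 * (s + log n) ≤ n * (Kap * tn n * (s + log n) / n * kap / tn n) / 2 := by
      have e : n * (Kap * tn n * (s + log n) / n * kap / tn n) / 2 = (Kap * kap) * (s + log n) / 2 := by
        field_simp
      have e2 : Kap * kap = kap + 4 := by unfold Kap; field_simp
      rw [e, e2]
      nlinarith
    have key := risk_sparse hb h hθ hs h0 h1 h2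
    have e : 4 * (n * (Kap * tn n * (s + log n) / n) * tn n)
        = 128 * Kap * (log n * (s + log n)) := by
      have : 4 * (n * (Kap * tn n * (s + log n) / n) * tn n) = 4 * Kap * (s + log n) * tn n ^ 2 := by
        field_simp
      rw [this, ht2]; ring
    rw [e] at key
    have : 0 ≤ Kc * (s * log n) := by positivity
    linarith

lemma main_aux :
    ∃ Ccal > (0 : ℝ), ∃ C > (0 : ℝ), ∃ N0 : ℕ, 0 < N0 ∧ ∃ c0 > (0 : ℝ), ∃ c1 > (0 : ℝ),
      ∀ n : ℕ, N0 ≤ n → ∀ s : ℕ, (s : ℝ) ≤ c0 * n →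
      ∀ hahat : (Fin n → ℝ) → ℝ, IsMMLESSL Ccal hahat →
      ∀ θ0 ∈ ell0 n s,
        (c1 * (Real.log n) ^ 2 ≤ (s : ℝ) →
          postRiskSSL hahat θ0 ≤ C * (s * Real.log n)) ∧
        postRiskSSL hahat θ0 ≤ C * (s * Real.log n + (Real.log n) ^ 3) := by
  obtain ⟨N1, hN1⟩ := bigN_exists
  obtain ⟨N2, hN2⟩ := large_exists (12800 * Kap ^ 2)
  have hK := Kn_pos
  have hKc := Kc_pos
  have hKs := Ks_pos
  have hC := CW_nonneg
  have hKap := one_le_Kap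
  refine ⟨1, one_pos, 2 * Ks + 2 * Kc + Kn * (CW + 256 * Kap + 3), by positivity,
    N1 + N2 + 1, by omega, 1, one_pos, 1, one_pos, fun n hn s _ hahat h θ0 hθ => ?_⟩
  have hb := hN1 n (by omega)
  have key := risk_main hb (hN2 n (by omega)) h hθ
  have hL := log_ge_one hb.1
  have hs0 : (0:ℝ) ≤ s := Nat.cast_nonneg _
  generalize log (n:ℝ) = L at *
  have fin : ∀ R : ℝ, s * L ≤ R → 1 ≤ R → L * L ≤ R →
      postRiskSSL hahat θ0 ≤ (2 * Ks + 2 * Kc + Kn * (CW + 256 * Kap + 3)) * R := by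
    intro R r1 r2 r3
    refine key.trans ?_
    have a1 : (2 * Ks + 2 * Kc) * (s * L) ≤ (2 * Ks + 2 * Kc) * R := by gcongr
    have a2 : CW + 128 * Kap * (L * (s + L)) + 3 ≤ (CW + 256 * Kap + 3) * R := by
      have b1 : Kap * (L * (s + L)) ≤ Kap * (2 * R) := by
        have : L * (s + L) ≤ 2 * R := by linarith
        gcongr
      nlinarith
    have a3 := mul_le_mul_of_nonneg_left a2 hK.le
    linarith
  constructor
  · intro hs
    have hs1 : L ≤ s := by nlinarith
    exact fin _ le_rfl (by nlinarith) (by nlinarith)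
  · have p : 0 ≤ s * L := by positivity
    have q : L * L ≤ L ^ 3 := by
      have : 0 ≤ L * L * (L - 1) := by
        have : 0 ≤ L - 1 := by linarith
        positivity
      linarith
    exact fin _ (by nlinarith) (by nlinarith) (by nlinarith)

end

/-- Theorem 4: near-optimal rate for the EB spike and slab
LASSO with Cauchy slab.  For a large enough constant `𝒞` in the maximisation
interval, there exist `C, N₀, c₀, c₁ > 0` such that for `n ≥ N₀` and
`c₁ log² n ≤ s ≤ c₀ n` the posterior squared `L²`-moment is at most
`C s log n` uniformly over `ℓ₀[s]`; assuming only `s ≤ c₀ n` the bound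
`C (s log n + log³ n)` holds. -/
theorem ssl_near_optimal_rate :
    ∃ Ccal > (0 : ℝ), ∃ C > (0 : ℝ), ∃ N0 : ℕ, 0 < N0 ∧ ∃ c0 > (0 : ℝ), ∃ c1 > (0 : ℝ),
      ∀ n : ℕ, N0 ≤ n → ∀ s : ℕ, (s : ℝ) ≤ c0 * n →
      ∀ hahat : (Fin n → ℝ) → ℝ, IsMMLESSL Ccal hahat →
      ∀ θ0 ∈ ell0 n s,
        (c1 * (Real.log n) ^ 2 ≤ (s : ℝ) →
          postRiskSSL hahat θ0 ≤ C * (s * Real.log n)) ∧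
        postRiskSSL hahat θ0 ≤ C * (s * Real.log n + (Real.log n) ^ 3) := by
  exact main_aux

end
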